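/- arXiv:2412.15771 — 3 statements merged into one kernel-verified Lean document; each statement's English description precedes it below -/
import Mathlib

section
/- Let V be a smooth n-vector field on an open set U ⊆ ℝⁿ and x ∈ U. Then V has constant coefficients on a neighbourhood of x if and only if either V vanishes identically on some neighbourhood of x, or V_x ≠ 0. -/
/-- Constant coefficients for a `q`-vector field (see context). -/
def HasConstantCoefficientsVecAt (n q : ℕ) (U : Set (Fin n → ℝ))
    (V : (Fin n → ℝ) → (((Fin n → ℝ) →L[ℝ] ℝ) [×q]→L[ℝ] ℝ)) (x : Fin n → ℝ) : Prop :=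
  ∃ W : Set (Fin n → ℝ), IsOpen W ∧ x ∈ W ∧ W ⊆ U ∧
    ∃ u : (Fin n → ℝ) → (Fin n → ℝ),
      ContDiffOn ℝ (⊤ : ℕ∞) u W ∧ Set.InjOn u W ∧ IsOpen (u '' W) ∧
      (∀ y ∈ W, Function.Bijective (fderiv ℝ u y)) ∧
      ∃ c : ((Fin n → ℝ) →L[ℝ] ℝ) [×q]→L[ℝ] ℝ,
        ∀ y ∈ W, ∀ w : Fin q → ((Fin n → ℝ) →L[ℝ] ℝ),
          c w = V y (fun i => (w i).comp (fderiv ℝ u y))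

/-!
Near a point where it does not vanish, a top-degree field is a nonvanishing smooth multiple of its
value there, and a change of coordinates `u` multiplies it by the Jacobian determinant of `u`. So it
suffices to find a local diffeomorphism whose Jacobian determinant is a given smooth function `g`
with `g x = 1`, and replacing one coordinate by a primitive of `g` along that coordinate does this.
Conversely, a field with constant coefficients vanishes near any point where it vanishes.
-/

open scoped ContDiff Convolution Topology

section DirectionalPrimitive

variable {E F : Type*} [NormedAddCommGroup E] [NormedSpace ℝ E]
  [NormedAddCommGroup F] [NormedSpace ℝ F]

theorem hasDerivAt_setIntegral_Iic [CompleteSpace F] {f : ℝ → F} {a : ℝ} (hf : Continuous f)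
    (hfi : MeasureTheory.Integrable f) :
    HasDerivAt (fun b ↦ ∫ t in Set.Iic b, f t) (f a) a := by
  have hsplit : (fun b ↦ ∫ t in Set.Iic b, f t) =
      fun b ↦ (∫ t in Set.Iic 0, f t) + ∫ t in (0 : ℝ)..b, f t := by
    funext b
    rw [← intervalIntegral.integral_Iic_sub_Iic hfi.integrableOn hfi.integrableOn, add_sub_cancel]
  rw [hsplit]
  exact (hf.integral_hasStrictDerivAt 0 a).hasDerivAt.const_add _

/-- The primitive of `g` in the direction `e`, meant for `ℓ e = 1` and compactly supported `g`: the
integral over the half-line `{y + s • e | s ≤ 0}`. Parametrising the line by the value `t` of `ℓ`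
makes the integrand supported in `ℓ '' tsupport g` for every `y`. -/
noncomputable def directionalPrimitive (ℓ : E →L[ℝ] ℝ) (e : E) (g : E → F) (y : E) : F :=
  ∫ t in Set.Iic (ℓ y), g (y + (t - ℓ y) • e)

variable {ℓ : E →L[ℝ] ℝ} {e : E} {g : E → F}

theorem apply_eq_zero_of_notMem_image_tsupport {F : Type*} [Zero F] {g : E → F} (he : ℓ e = 1)
    (y : E) {t : ℝ} (ht : t ∉ ℓ '' tsupport g) : g (y + (t - ℓ y) • e) = 0 :=
  image_eq_zero_of_notMem_tsupport fun h ↦ ht ⟨_, h, by simp [he]⟩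

theorem contDiff_directionalPrimitive {n : ℕ∞} (he : ℓ e = 1) (hg : ContDiff ℝ n g)
    (hgc : HasCompactSupport g) : ContDiff ℝ n (directionalPrimitive ℓ e g) := by
  have hconv : directionalPrimitive ℓ e g = fun y ↦
      ((fun t ↦ g (y + (t - ℓ y) • e)) ⋆[(ContinuousLinearMap.lsmul ℝ ℝ).flip]
        (Set.Ici (0 : ℝ)).indicator 1) (ℓ y) := by
    funext y
    rw [directionalPrimitive, ← MeasureTheory.integral_indicator measurableSet_Iic]
    refine MeasureTheory.integral_congr_ae (.of_forall fun t ↦ ?_)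
    by_cases ht : t ≤ ℓ y <;> simp [Set.indicator, ht]
  rw [hconv, ← contDiffOn_univ]
  refine MeasureTheory.contDiffOn_convolution_left_with_param_comp _ ℓ.contDiff.contDiffOn
    isOpen_univ (hgc.isCompact.image ℓ.continuous)
    (fun y t _ ht ↦ apply_eq_zero_of_notMem_image_tsupport he y ht) ?_ ?_
  · exact (MeasureTheory.locallyIntegrable_const 1).indicator measurableSet_Ici
  · have : ContDiff ℝ n fun p : E × ℝ ↦ p.1 + (p.2 - ℓ p.1) • e := by fun_prop
    exact (hg.comp this).contDiffOn

theorem fderiv_directionalPrimitive_apply [CompleteSpace F] (he : ℓ e = 1) (hg : ContDiff ℝ 1 g)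
    (hgc : HasCompactSupport g) (y : E) :
    fderiv ℝ (directionalPrimitive ℓ e g) y e = g y := by
  have hcont : Continuous fun t ↦ g (y + (t - ℓ y) • e) := hg.continuous.comp (by fun_prop)
  have hint : MeasureTheory.Integrable fun t ↦ g (y + (t - ℓ y) • e) :=
    hcont.integrable_of_hasCompactSupport <| .intro (hgc.isCompact.image ℓ.continuous)
      fun _ ht ↦ apply_eq_zero_of_notMem_image_tsupport he y ht
  have hline (r : ℝ) : directionalPrimitive ℓ e g (y + r • e) =
      ∫ t in Set.Iic (ℓ y + r), g (y + (t - ℓ y) • e) := by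
    simp only [directionalPrimitive, map_add, map_smul, he, smul_eq_mul, mul_one]
    congr! 3 with t
    module
  have hderiv : HasLineDerivAt ℝ (directionalPrimitive ℓ e g) (g y) y e := by
    have h := HasDerivAt.comp_const_add (ℓ y) 0 <|
      hasDerivAt_setIntegral_Iic (a := ℓ y + 0) hcont hint
    simpa [HasLineDerivAt, hline] using h
  have hdiff := (contDiff_directionalPrimitive (n := 1) he hg hgc).differentiable one_ne_zero y
  exact (hdiff.hasFDerivAt.hasLineDerivAt e).unique hderiv

end DirectionalPrimitive

section PrescribedJacobian

variable {E F : Type*} [NormedAddCommGroup E] [NormedSpace ℝ E] [FiniteDimensional ℝ E]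
  [NormedAddCommGroup F] [NormedSpace ℝ F]

theorem exists_contDiff_hasCompactSupport_eventuallyEq {n : ℕ∞} {U : Set E} {g : E → F} {x : E}
    (hU : U ∈ 𝓝 x) (hg : ContDiffOn ℝ n g U) :
    ∃ G : E → F, ContDiff ℝ n G ∧ HasCompactSupport G ∧ G =ᶠ[𝓝 x] g := by
  obtain ⟨r, hr, hrU⟩ := Metric.mem_nhds_iff.1 hU
  let χ : ContDiffBump x := ⟨r / 4, r / 2, by positivity, by linarith⟩
  have hχU : tsupport χ ⊆ Metric.ball x r :=
    χ.tsupport_eq.trans_subset (Metric.closedBall_subset_ball (half_lt_self hr))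
  refine ⟨fun y ↦ χ y • g y, contMDiff_iff_contDiff.1 (contMDiff_of_tsupport fun y hy ↦ ?_),
    χ.hasCompactSupport.smul_right, ?_⟩
  · have hyU : U ∈ 𝓝 y := Filter.mem_of_superset
      (Metric.isOpen_ball.mem_nhds (hχU (tsupport_smul_subset_left _ _ hy))) hrU
    exact (χ.contDiff.contDiffAt.smul (hg.contDiffAt hyU)).contMDiffAt
  · filter_upwards [χ.eventuallyEq_one] with y hy
    simp [hy]

theorem exists_contDiff_det_fderiv_eq [Nontrivial E] {n : ℕ∞} {g : E → ℝ} (hn : 1 ≤ n)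
    (hg : ContDiff ℝ n g) (hgc : HasCompactSupport g) :
    ∃ u : E → E, ContDiff ℝ n u ∧ ∀ y, (fderiv ℝ u y).det = g y := by
  obtain ⟨e, he0⟩ := exists_ne (0 : E)
  obtain ⟨ℓ, he⟩ := SeparatingDual.exists_eq_one (R := ℝ) he0
  have hn1 : (1 : WithTop ℕ∞) ≤ n := mod_cast hn
  set Φ := directionalPrimitive ℓ e g
  have hΦ : ContDiff ℝ n Φ := contDiff_directionalPrimitive he hg hgc
  refine ⟨fun y ↦ y + (Φ y - ℓ y) • e, by fun_prop, fun y ↦ ?_⟩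
  have hΦy : HasFDerivAt Φ (fderiv ℝ Φ y) y :=
    (hΦ.differentiable (zero_lt_one.trans_le hn1).ne' y).hasFDerivAt
  have hu : HasFDerivAt (fun y ↦ y + (Φ y - ℓ y) • e)
      (.id ℝ E + (fderiv ℝ Φ y - ℓ).smulRight e) y :=
    (hasFDerivAt_id y).add ((hΦy.sub ℓ.hasFDerivAt).smul_const e)
  have htransvection : (fderiv ℝ (fun y ↦ y + (Φ y - ℓ y) • e) y : E →ₗ[ℝ] E) =
      LinearMap.transvection ((fderiv ℝ Φ y - ℓ : E →L[ℝ] ℝ) : E →ₗ[ℝ] ℝ) e := by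
    rw [hu.fderiv]
    rfl
  calc (fderiv ℝ (fun y ↦ y + (Φ y - ℓ y) • e) y).det
      = 1 + (fderiv ℝ Φ y e - ℓ e) := by
        rw [ContinuousLinearMap.det, htransvection, LinearMap.transvection.det]; rfl
    _ = fderiv ℝ Φ y e := by rw [he, add_sub_cancel]
    _ = g y := fderiv_directionalPrimitive_apply he (hg.of_le hn1) hgc y

/-- In dimension zero every determinant is `1`, whence the normalisation `g x = 1`. -/
theorem exists_contDiff_det_fderiv_eventuallyEq {n : ℕ∞} {U : Set E} {g : E → ℝ} {x : E}
    (hn : 1 ≤ n) (hU : U ∈ 𝓝 x) (hg : ContDiffOn ℝ n g U) (hgx : g x = 1) :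
    ∃ u : E → E, ContDiff ℝ n u ∧ (fun y ↦ (fderiv ℝ u y).det) =ᶠ[𝓝 x] g := by
  cases subsingleton_or_nontrivial E
  · refine ⟨id, contDiff_id, .of_forall fun y ↦ ?_⟩
    rw [Subsingleton.elim y x, hgx]
    exact (congrArg ContinuousLinearMap.det fderiv_id).trans LinearMap.det_id
  · obtain ⟨G, hG, hGc, hGg⟩ := exists_contDiff_hasCompactSupport_eventuallyEq hU hg
    obtain ⟨u, hu, hdet⟩ := exists_contDiff_det_fderiv_eq hn hG hGc
    exact ⟨u, hu, by simpa only [hdet] using hGg⟩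

end PrescribedJacobian

theorem exists_isOpen_injOn_isOpen_image {𝕂 E F : Type*} [RCLike 𝕂]
    [NormedAddCommGroup E] [NormedSpace 𝕂 E] [CompleteSpace E]
    [NormedAddCommGroup F] [NormedSpace 𝕂 F] {n : WithTop ℕ∞} {u : E → F} {D : E ≃L[𝕂] F}
    {N : Set E} {x : E} (hu : ContDiffAt 𝕂 n u x) (hn : n ≠ 0)
    (hD : HasFDerivAt u (D : E →L[𝕂] F) x) (hN : N ∈ 𝓝 x) :
    ∃ W ⊆ N, IsOpen W ∧ x ∈ W ∧ Set.InjOn u W ∧ IsOpen (u '' W) := by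
  let H := hu.toOpenPartialHomeomorph u hD hn
  have hW : IsOpen (H.source ∩ interior N) := H.open_source.inter isOpen_interior
  exact ⟨H.source ∩ interior N, Set.inter_subset_right.trans interior_subset, hW,
    ⟨hu.mem_toOpenPartialHomeomorph_source hD hn, mem_interior_iff_mem_nhds.2 hN⟩,
    H.injOn.mono Set.inter_subset_left,
    H.isOpen_image_of_subset_source hW Set.inter_subset_left⟩

section TopDegree

theorem alternatingMap_apply_basis_mul_comm {R M ι : Type*} [CommRing R] [AddCommGroup M]
    [Module R M] [Finite ι] (b : Module.Basis ι R M) (A B : M [⋀^ι]→ₗ[R] R) (w : ι → M) :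
    A b * B w = B b * A w := by
  classical
  have := Fintype.ofFinite ι
  rw [A.eq_smul_basis_det b, B.eq_smul_basis_det b]
  simp only [AlternatingMap.smul_apply, b.det_self, smul_eq_mul, mul_one]
  ring

theorem alternatingMap_apply_comp {R M ι : Type*} [CommRing R] [AddCommGroup M]
    [Module R M] [Finite ι] (b : Module.Basis ι R M) (A : M [⋀^ι]→ₗ[R] R) (f : M →ₗ[R] M)
    (w : ι → M) : A (f ∘ w) = f.det * A w := by
  classical
  have := Fintype.ofFinite ι
  rw [A.eq_smul_basis_det b]
  simp only [AlternatingMap.smul_apply, b.det_comp, smul_eq_mul]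
  ring

variable {𝕜 E ι : Type*} [NontriviallyNormedField 𝕜] [CompleteSpace 𝕜] [NormedAddCommGroup E]
  [NormedSpace 𝕜 E] [FiniteDimensional 𝕜 E]

theorem det_precomp (L : E →L[𝕜] E) :
    (ContinuousLinearMap.precomp 𝕜 L : (E →L[𝕜] 𝕜) →L[𝕜] (E →L[𝕜] 𝕜)).det = L.det := by
  let e : (E →ₗ[𝕜] 𝕜) ≃ₗ[𝕜] (E →L[𝕜] 𝕜) := LinearMap.toContinuousLinearMap
  calc (ContinuousLinearMap.precomp 𝕜 L : (E →L[𝕜] 𝕜) →L[𝕜] (E →L[𝕜] 𝕜)).det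
      = (e ∘ₗ (L : E →ₗ[𝕜] E).dualMap ∘ₗ e.symm : (E →L[𝕜] 𝕜) →ₗ[𝕜] (E →L[𝕜] 𝕜)).det := rfl
    _ = (L : E →ₗ[𝕜] E).dualMap.det := LinearMap.det_conj _ e
    _ = L.det := LinearMap.det_dualMap _

theorem alternatingMap_apply_comp_continuousLinearMap [Finite ι]
    (b : Module.Basis ι 𝕜 (E →L[𝕜] 𝕜)) (A : (E →L[𝕜] 𝕜) [⋀^ι]→ₗ[𝕜] 𝕜) (L : E →L[𝕜] E)
    (w : ι → (E →L[𝕜] 𝕜)) : A (fun i ↦ (w i).comp L) = L.det * A w := by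
  rw [← det_precomp L]
  exact alternatingMap_apply_comp b A (ContinuousLinearMap.precomp 𝕜 L).toLinearMap w

end TopDegree

section VectorFields

variable {n q : ℕ} {U : Set (Fin n → ℝ)}
  {V : (Fin n → ℝ) → (((Fin n → ℝ) →L[ℝ] ℝ) [×q]→L[ℝ] ℝ)} {x : Fin n → ℝ}

theorem HasConstantCoefficientsVecAt.eventually_eq_zero
    (h : HasConstantCoefficientsVecAt n q U V x) (hVx : V x = 0) : ∀ᶠ y in 𝓝 x, V y = 0 := by
  obtain ⟨W, hW, hxW, -, u, -, -, -, hbij, c, hc⟩ := h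
  filter_upwards [hW.mem_nhds hxW] with y hy
  ext w
  let D := ContinuousLinearEquiv.ofBijective (fderiv ℝ u y)
    (LinearMap.ker_eq_bot.2 (hbij y hy).1) (LinearMap.range_eq_top.2 (hbij y hy).2)
  have hw : (fun i ↦ ((w i).comp (D.symm : (Fin n → ℝ) →L[ℝ] (Fin n → ℝ))).comp
      (fderiv ℝ u y)) = w := by
    funext i
    ext v
    exact congrArg (w i) (D.symm_apply_apply v)
  rw [← hw, ← hc y hy, hc x hxW, hVx]
  rfl

theorem hasConstantCoefficientsVecAt_of_eventually {u : (Fin n → ℝ) → (Fin n → ℝ)}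
    {c : ((Fin n → ℝ) →L[ℝ] ℝ) [×q]→L[ℝ] ℝ} (hU : U ∈ 𝓝 x) (hu : ContDiffOn ℝ ∞ u U)
    (hdet : (fderiv ℝ u x).det ≠ 0)
    (hc : ∀ᶠ y in 𝓝 x, ∀ w, c w = V y fun i ↦ (w i).comp (fderiv ℝ u y)) :
    HasConstantCoefficientsVecAt n q U V x := by
  have hux : ContDiffAt ℝ ∞ u x := hu.contDiffAt hU
  have hD : HasFDerivAt u ((fderiv ℝ u x).toContinuousLinearEquivOfDetNeZero hdet :
      (Fin n → ℝ) →L[ℝ] (Fin n → ℝ)) x := (hux.differentiableAt (by simp)).hasFDerivAt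
  have hdet' : ∀ᶠ y in 𝓝 x, (fderiv ℝ u y).det ≠ 0 :=
    (ContinuousLinearMap.continuous_det.continuousAt.comp
      (hux.continuousAt_fderiv (by simp))).eventually_ne hdet
  obtain ⟨W, hWN, hW, hxW, hinj, himage⟩ := exists_isOpen_injOn_isOpen_image hux (by simp) hD
    (Filter.inter_mem hU (hdet'.and hc))
  refine ⟨W, hW, hxW, fun y hy ↦ (hWN hy).1, u, hu.mono fun y hy ↦ (hWN hy).1, hinj, himage,
    fun y hy ↦ ?_, c, fun y hy ↦ (hWN hy).2.2⟩
  exact ((fderiv ℝ u y).toContinuousLinearEquivOfDetNeZero (hWN hy).2.1).bijective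

theorem hasConstantCoefficientsVecAt_of_eventually_eq_zero (hU : U ∈ 𝓝 x)
    (hV : ∀ᶠ y in 𝓝 x, V y = 0) : HasConstantCoefficientsVecAt n q U V x := by
  refine hasConstantCoefficientsVecAt_of_eventually (u := id) (c := 0) hU contDiffOn_id ?_ ?_
  · rw [fderiv_id]
    exact LinearMap.det_id.trans_ne one_ne_zero
  · filter_upwards [hV] with y hy w
    rw [hy]
    rfl

end VectorFields

theorem hasConstantCoefficientsVecAt_of_ne_zero {n : ℕ} {U : Set (Fin n → ℝ)}
    {V : (Fin n → ℝ) → (((Fin n → ℝ) →L[ℝ] ℝ) [×n]→L[ℝ] ℝ)} {x : Fin n → ℝ} (hU : U ∈ 𝓝 x)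
    (hV : ContDiffOn ℝ ∞ V U) (halt : ∀ y ∈ U, ∀ w i j, i ≠ j → w i = w j → V y w = 0)
    (hVx : V x ≠ 0) : HasConstantCoefficientsVecAt n n U V x := by
  let b : Module.Basis (Fin n) ℝ ((Fin n → ℝ) →L[ℝ] ℝ) :=
    (Pi.basisFun ℝ (Fin n)).dualBasis.map LinearMap.toContinuousLinearMap
  let A (y : U) : ((Fin n → ℝ) →L[ℝ] ℝ) [⋀^Fin n]→ₗ[ℝ] ℝ :=
    { (V y).toMultilinearMap with
      map_eq_zero_of_eq' := fun w i j hw hij ↦ halt y y.2 w i j hij hw }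
  let x' : U := ⟨x, mem_of_mem_nhds hU⟩
  have hVxb : V x b ≠ 0 := ((A x').map_basis_ne_zero_iff b).2 fun h ↦
    hVx (ContinuousMultilinearMap.ext fun w ↦ DFunLike.congr_fun h w)
  have hVb : ContDiffOn ℝ ∞ (fun y ↦ V y b) U :=
    ContDiff.comp_contDiffOn (g := ContinuousMultilinearMap.apply ℝ
      (fun _ : Fin n ↦ (Fin n → ℝ) →L[ℝ] ℝ) ℝ b) (ContinuousLinearMap.contDiff _) hV
  have hN : U ∩ {y | V y b ≠ 0} ∈ 𝓝 x :=
    Filter.inter_mem hU ((hVb.contDiffAt hU).continuousAt.eventually_ne hVxb)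
  have hratio : ContDiffOn ℝ ∞ (fun y ↦ V x b / V y b) (U ∩ {y | V y b ≠ 0}) :=
    contDiffOn_const.div (hVb.mono Set.inter_subset_left) fun _ hy ↦ hy.2
  obtain ⟨u, hu, hdet⟩ :=
    exists_contDiff_det_fderiv_eventuallyEq le_top hN hratio (div_self hVxb)
  refine hasConstantCoefficientsVecAt_of_eventually (c := V x) hU hu.contDiffOn ?_ ?_
  · rw [hdet.eq_of_nhds, div_self hVxb]
    exact one_ne_zero
  · filter_upwards [hdet, hN] with y hy ⟨hyU, hVyb⟩ w
    calc V x w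
        = V x b / V y b * V y w := by
          rw [div_mul_eq_mul_div, eq_div_iff hVyb, mul_comm]
          exact alternatingMap_apply_basis_mul_comm b (A ⟨y, hyU⟩) (A x') w
      _ = (fderiv ℝ u y).det * V y w := by rw [hy]
      _ = V y fun i ↦ (w i).comp (fderiv ℝ u y) :=
          (alternatingMap_apply_comp_continuousLinearMap b (A ⟨y, hyU⟩) _ w).symm

/-- Example 1.19: a smooth `n`-vector field (top degree) on
`U ⊆ ℝⁿ` has constant coefficients on a neighbourhood of `x ∈ U` if and only if
either it vanishes identically on some neighbourhood of `x`, or `V_x ≠ 0`. -/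
theorem topVector_constantCoefficients_iff (n : ℕ) (U : Set (Fin n → ℝ))
    (hU : IsOpen U)
    (V : (Fin n → ℝ) → (((Fin n → ℝ) →L[ℝ] ℝ) [×n]→L[ℝ] ℝ))
    (hV : ContDiffOn ℝ (⊤ : ℕ∞) V U)
    (halt : ∀ y ∈ U, ∀ w : Fin n → ((Fin n → ℝ) →L[ℝ] ℝ), ∀ i j, i ≠ j → w i = w j →
      V y w = 0)
    (x : Fin n → ℝ) (hx : x ∈ U) :
    HasConstantCoefficientsVecAt n n U V x ↔
      ((∃ W : Set (Fin n → ℝ), IsOpen W ∧ x ∈ W ∧ ∀ y ∈ W, V y = 0) ∨ V x ≠ 0) := by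
  have hUx : U ∈ 𝓝 x := hU.mem_nhds hx
  have heventually : (∃ W : Set (Fin n → ℝ), IsOpen W ∧ x ∈ W ∧ ∀ y ∈ W, V y = 0) ↔
      ∀ᶠ y in 𝓝 x, V y = 0 := by
    rw [eventually_nhds_iff]
    simp only [and_comm, and_assoc]
  rw [heventually]
  constructor
  · intro h
    exact or_iff_not_imp_right.2 fun hVx ↦ h.eventually_eq_zero (not_not.1 hVx)
  · rintro (hV0 | hVx)
    · exact hasConstantCoefficientsVecAt_of_eventually_eq_zero hUx hV0
    · exact hasConstantCoefficientsVecAt_of_ne_zero hUx hV halt hVx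
end

section
/- Let ω be a smooth 1-form on an open set U ⊆ ℝⁿ with ω_x ≠ 0 at a point x ∈ U. Then ω has conformal constant coefficients on a neighbourhood of x if and only if ω ∧ dω = 0 on a neighbourhood of x. -/
/-!
If `ω = f · u^*c` with `c` constant, then `ω ∧ dω = f² · u^*(c ∧ dc) = 0`.

Conversely, choose `e` with `ω_x(e) = 1` and shrink to a neighbourhood where `ω(e) ≠ 0`. For each
`a` the vector `ω_y(e) a - ω_y(a) e` lies in `ker ω_y`. Regarding `a` as a frozen parameter, this
defines a vector field `Y` on `E × E` that is annihilated by the pullback `η` of `ω` along the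
second projection. Along an integral curve `c` of `Y`, a variation `r` satisfies
`(η(r))' = dη(Y, r)`, and `η ∧ dη = 0` turns the right-hand side into a multiple of `η(r)`. Hence
the flow of `Y` preserves `ker η`. With a suitable initial condition, its time-one map is a
diffeomorphism sending the constant hyperplane field `ker ω_x` to `ker ω`, which says that `ω` is
proportional to the pullback of the constant form `ω_x`.

The flow depends smoothly on the initial point because the Picard integral equation
`γ(t) - ∫₀ᵗ Y(γ) = p` is a smooth equation in the Banach space of continuous curves, whose
linearization is the identity minus a quasinilpotent Volterra operator; the inverse function theorem
applies.
-/

/-- Constant coefficients for a `p`-form (see context). -/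
def HasConstantCoefficientsFormAt (n p : ℕ) (U : Set (Fin n → ℝ))
    (ω : (Fin n → ℝ) → ((Fin n → ℝ) [×p]→L[ℝ] ℝ)) (x : Fin n → ℝ) : Prop :=
  ∃ V : Set (Fin n → ℝ), IsOpen V ∧ x ∈ V ∧ V ⊆ U ∧
    ∃ u : (Fin n → ℝ) → (Fin n → ℝ),
      ContDiffOn ℝ (⊤ : ℕ∞) u V ∧ Set.InjOn u V ∧ IsOpen (u '' V) ∧
      (∀ y ∈ V, Function.Bijective (fderiv ℝ u y)) ∧
      ∃ c : (Fin n → ℝ) [×p]→L[ℝ] ℝ,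
        ∀ y ∈ V, ∀ v : Fin p → (Fin n → ℝ),
          ω y v = c (fun i => fderiv ℝ u y (v i))

/-- Conformal constant coefficients for a `p`-form: `ω = f·ω′` near `x` for some
smooth function `f` and some `p`-form `ω′` with constant coefficients near `x`. -/
def HasConformalConstantCoefficientsFormAt (n p : ℕ) (U : Set (Fin n → ℝ))
    (ω : (Fin n → ℝ) → ((Fin n → ℝ) [×p]→L[ℝ] ℝ)) (x : Fin n → ℝ) : Prop :=
  ∃ V : Set (Fin n → ℝ), IsOpen V ∧ x ∈ V ∧ V ⊆ U ∧
    ∃ f : (Fin n → ℝ) → ℝ, ContDiffOn ℝ (⊤ : ℕ∞) f V ∧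
      ∃ ω' : (Fin n → ℝ) → ((Fin n → ℝ) [×p]→L[ℝ] ℝ),
        HasConstantCoefficientsFormAt n p Set.univ ω' x ∧
        ∀ y ∈ V, ω y = f y • ω' y

open Set Metric Filter Topology

universe u v

section Nemytskii

open scoped ContDiff

variable {K : Type v} [TopologicalSpace K]

section Topological

variable {E F : Type u} [TopologicalSpace E] [TopologicalSpace F] {f : E → F} {s : Set E}

open Classical in
/-- The Nemytskii (superposition) operator `γ ↦ f ∘ γ` between spaces of continuous maps. Its value
is `0` where `f ∘ γ` is discontinuous, which lets `f` be regular on an open set only. -/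
noncomputable def nemytskii [Zero F] (f : E → F) (γ : C(K, E)) : C(K, F) :=
  if h : Continuous (f ∘ γ) then ⟨f ∘ γ, h⟩ else 0

theorem nemytskii_apply [Zero F] {γ : C(K, E)} (hf : ContinuousOn f s) (hγ : ∀ t, γ t ∈ s)
    (t : K) : nemytskii f γ t = f (γ t) := by
  rw [nemytskii, dif_pos (hf.comp_continuous γ.continuous hγ)]
  rfl

theorem isOpen_setOf_forall_mem [CompactSpace K] (hs : IsOpen s) :
    IsOpen {γ : C(K, E) | ∀ t, γ t ∈ s} := by
  simpa [MapsTo] using ContinuousMap.isOpen_setOfPred_mapsTo (X := K) isCompact_univ hs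

end Topological

variable [CompactSpace K]
  {E F : Type u} [NormedAddCommGroup E] [NormedSpace ℝ E] [NormedAddCommGroup F] [NormedSpace ℝ F]
  {f : E → F} {s : Set E} {γ : C(K, E)}

/-- Pointwise evaluation of a family of linear maps on a family of vectors, as a bounded bilinear
map. -/
noncomputable def pointwiseApply : C(K, E →L[ℝ] F) →L[ℝ] C(K, E) →L[ℝ] C(K, F) :=
  LinearMap.mkContinuous₂
    (LinearMap.mk₂ ℝ
      (fun (A : C(K, E →L[ℝ] F)) (g : C(K, E)) => (⟨fun t => A t (g t), by fun_prop⟩ : C(K, F)))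
      (by intros; ext; simp) (by intros; ext; simp) (by intros; ext; simp)
      (by intros; ext; simp)) 1 fun A g => by
    rw [one_mul, ContinuousMap.norm_le _ (by positivity)]
    exact fun t => (A t).le_of_opNorm_le_of_le (A.norm_coe_le_norm t) (g.norm_coe_le_norm t)

@[simp]
theorem pointwiseApply_apply (A : C(K, E →L[ℝ] F)) (g : C(K, E)) (t : K) :
    pointwiseApply A g t = A t (g t) := rfl

theorem exists_norm_sub_sub_fderiv_le (hs : IsOpen s) (hf : ContDiffOn ℝ 1 f s) {k : Set E}
    (hk : IsCompact k) (hks : k ⊆ s) {c : ℝ} (hc : 0 < c) :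
    ∃ δ > 0, ∀ y ∈ k, ∀ h, ‖h‖ < δ →
      y + h ∈ s ∧ ‖f (y + h) - f y - fderiv ℝ f y h‖ ≤ c * ‖h‖ := by
  obtain ⟨δ₁, hδ₁, hthick⟩ := hk.exists_thickening_subset_open hs hks
  have hcont : ContinuousOn (fderiv ℝ f) s := hf.continuousOn_fderiv_of_isOpen hs le_rfl
  obtain ⟨δ₂, hδ₂, hunif⟩ := mem_uniformity_dist.1 <|
    hk.uniformContinuousAt_of_continuousAt (fderiv ℝ f)
      (fun y hy => hcont.continuousAt (hs.mem_nhds (hks hy))) (dist_mem_uniformity hc)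
  refine ⟨min δ₁ δ₂, lt_min hδ₁ hδ₂, fun y hy h hh => ?_⟩
  have hball : ball y (min δ₁ δ₂) ⊆ s := fun z hz =>
    hthick (mem_thickening_iff.2 ⟨y, hy, (mem_ball.1 hz).trans_le (min_le_left _ _)⟩)
  have hyh : y + h ∈ ball y (min δ₁ δ₂) := by simpa using hh
  refine ⟨hball hyh, ?_⟩
  have hderiv : ∀ z ∈ ball y (min δ₁ δ₂), ‖fderiv ℝ f z - fderiv ℝ f y‖ ≤ c := fun z hz => by
    rw [← dist_eq_norm, dist_comm]
    exact (@hunif y z (by rw [dist_comm]; exact (mem_ball.1 hz).trans_le (min_le_right _ _)) hy).le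
  simpa using (convex_ball y _).norm_image_sub_le_of_norm_fderiv_le'
    (fun z hz => (hf.contDiffAt (hs.mem_nhds (hball hz))).differentiableAt one_ne_zero)
    hderiv (mem_ball_self (lt_min hδ₁ hδ₂)) hyh

theorem hasFDerivAt_nemytskii (hs : IsOpen s) (hf : ContDiffOn ℝ 1 f s) (hγ : ∀ t, γ t ∈ s) :
    HasFDerivAt (nemytskii f) (pointwiseApply (nemytskii (fderiv ℝ f) γ)) γ := by
  rw [hasFDerivAt_iff_isLittleO_nhds_zero, Asymptotics.isLittleO_iff]
  intro c hc
  obtain ⟨δ, hδ, hf_le⟩ := exists_norm_sub_sub_fderiv_le hs hf (isCompact_range γ.continuous)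
    (range_subset_iff.2 hγ) hc
  filter_upwards [ball_mem_nhds (0 : C(K, E)) hδ] with h hh
  have hlt : ∀ t, ‖h t‖ < δ := fun t =>
    (h.norm_coe_le_norm t).trans_lt (mem_ball_zero_iff.1 hh)
  have hγh : ∀ t, (γ + h) t ∈ s := fun t => (hf_le _ ⟨t, rfl⟩ _ (hlt t)).1
  rw [ContinuousMap.norm_le _ (by positivity)]
  intro t
  simp only [ContinuousMap.sub_apply, pointwiseApply_apply, nemytskii_apply hf.continuousOn hγ,
    nemytskii_apply hf.continuousOn hγh,
    nemytskii_apply (hf.continuousOn_fderiv_of_isOpen hs le_rfl) hγ]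
  exact (hf_le _ ⟨t, rfl⟩ _ (hlt t)).2.trans (by gcongr; exact h.norm_coe_le_norm t)

theorem differentiableOn_nemytskii (hs : IsOpen s) (hf : ContDiffOn ℝ 1 f s) :
    DifferentiableOn ℝ (nemytskii f) {γ : C(K, E) | ∀ t, γ t ∈ s} := fun _ hγ =>
  (hasFDerivAt_nemytskii hs hf hγ).differentiableAt.differentiableWithinAt

theorem contDiffOn_nemytskii_nat (hs : IsOpen s) (n : ℕ) (hf : ContDiffOn ℝ ∞ f s) :
    ContDiffOn ℝ n (nemytskii f) {γ : C(K, E) | ∀ t, γ t ∈ s} := by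
  induction n generalizing F with
  | zero => simpa using (differentiableOn_nemytskii hs (hf.of_le (by simp))).continuousOn
  | succ n ih =>
    rw [Nat.cast_succ, contDiffOn_succ_iff_fderiv_of_isOpen (isOpen_setOf_forall_mem hs)]
    refine ⟨differentiableOn_nemytskii hs (hf.of_le (by simp)), by simp, ?_⟩
    have hcomp := (pointwiseApply (K := K) (E := E) (F := F)).contDiff.comp_contDiffOn
      (ih (hf.fderiv_of_isOpen hs (by simp)))
    exact hcomp.congr fun γ hγ => (hasFDerivAt_nemytskii hs (hf.of_le (by simp)) hγ).fderiv

theorem contDiffOn_nemytskii (hs : IsOpen s) (hf : ContDiffOn ℝ ∞ f s) :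
    ContDiffOn ℝ ∞ (nemytskii f) {γ : C(K, E) | ∀ t, γ t ∈ s} :=
  contDiffOn_infty.2 fun n => contDiffOn_nemytskii_nat hs n hf

end Nemytskii

section Volterra

open scoped unitInterval

variable {E : Type*} [NormedAddCommGroup E] [NormedSpace ℝ E]

/-- The Volterra operator `g ↦ (t ↦ ∫ r in 0..t, g r)` on continuous functions on `[0, 1]`. -/
noncomputable def volterra : C(I, E) →L[ℝ] C(I, E) :=
  LinearMap.mkContinuous
    { toFun g := ⟨fun t => ∫ r in (0 : ℝ)..t, IccExtend zero_le_one g r, by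
        fun_prop⟩
      map_add' f g := by
        ext t
        exact intervalIntegral.integral_add
          (f.continuous.Icc_extend'.intervalIntegrable _ _)
          (g.continuous.Icc_extend'.intervalIntegrable _ _)
      map_smul' c g := by
        ext t
        exact intervalIntegral.integral_smul c _ }
    1 fun g => by
      rw [ContinuousMap.norm_le _ (by positivity)]
      intro t
      have hle := intervalIntegral.norm_integral_le_of_norm_le_const (a := 0) (b := t)
        fun r _ => g.norm_coe_le_norm (projIcc 0 1 zero_le_one r)
      refine hle.trans ?_
      rw [sub_zero, abs_of_nonneg t.2.1, one_mul]
      exact mul_le_of_le_one_right (norm_nonneg g) t.2.2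

theorem volterra_apply (g : C(I, E)) (t : I) :
    volterra g t = ∫ r in (0 : ℝ)..t, IccExtend zero_le_one g r := rfl

theorem norm_volterra_apply_le {g : C(I, E)} {C : ℝ} {n : ℕ}
    (hg : ∀ t, ‖g t‖ ≤ C * (t : ℝ) ^ n / n.factorial) (t : I) :
    ‖volterra g t‖ ≤ C * (t : ℝ) ^ (n + 1) / (n + 1).factorial := by
  calc ‖volterra g t‖ ≤ ∫ r in (0 : ℝ)..t, C / n.factorial * r ^ n := by
        rw [volterra_apply]
        refine intervalIntegral.norm_integral_le_of_norm_le t.2.1 (.of_forall fun r hr => ?_)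
          (Continuous.intervalIntegrable (by fun_prop) _ _)
        have hrI : r ∈ Icc (0 : ℝ) 1 := ⟨hr.1.le, hr.2.trans t.2.2⟩
        rw [IccExtend_of_mem _ _ hrI, div_mul_eq_mul_div]
        exact hg ⟨r, hrI⟩
    _ = C * (t : ℝ) ^ (n + 1) / (n + 1).factorial := by
        rw [intervalIntegral.integral_const_mul, integral_pow, Nat.factorial_succ]
        push_cast
        field_simp
        simp

theorem norm_volterra_comp_pow_apply_le (A : C(I, E →L[ℝ] E)) (n : ℕ) (g : C(I, E)) (t : I) :
    ‖((volterra ∘L pointwiseApply A) ^ n) g t‖ ≤ ‖A‖ ^ n * ‖g‖ * (t : ℝ) ^ n / n.factorial := by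
  induction n generalizing t with
  | zero => simpa using g.norm_coe_le_norm t
  | succ n ih =>
    rw [pow_succ']
    refine norm_volterra_apply_le (g := pointwiseApply A _) (fun r => ?_) t
    calc ‖pointwiseApply A (((volterra ∘L pointwiseApply A) ^ n) g) r‖
        ≤ ‖A‖ * (‖A‖ ^ n * ‖g‖ * (r : ℝ) ^ n / n.factorial) :=
          (A r).le_of_opNorm_le_of_le (A.norm_coe_le_norm r) (ih r)
      _ = ‖A‖ ^ (n + 1) * ‖g‖ * (r : ℝ) ^ n / n.factorial := by ring

theorem norm_volterra_comp_pow_le (A : C(I, E →L[ℝ] E)) (n : ℕ) :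
    ‖(volterra ∘L pointwiseApply A) ^ n‖ ≤ ‖A‖ ^ n / n.factorial := by
  refine ContinuousLinearMap.opNorm_le_bound _ (by positivity) fun g => ?_
  rw [ContinuousMap.norm_le _ (by positivity)]
  intro t
  refine (norm_volterra_comp_pow_apply_le A n g t).trans ?_
  rw [div_mul_eq_mul_div]
  refine div_le_div_of_nonneg_right ?_ (by positivity)
  exact mul_le_of_le_one_right (by positivity) (pow_le_one₀ t.2.1 t.2.2)

theorem isUnit_one_sub_of_norm_pow_lt_one {R : Type*} [NormedRing R] [CompleteSpace R] {a : R}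
    {n : ℕ} (h : ‖a ^ n‖ < 1) : IsUnit (1 - a) := by
  have hunit := isUnit_one_sub_of_norm_lt_one h
  rw [← mul_neg_geom_sum] at hunit
  refine (Commute.isUnit_mul_iff ?_).1 hunit |>.1
  rw [Commute, SemiconjBy, mul_neg_geom_sum, geom_sum_mul_neg]

theorem apply_zero_of_sub_volterra_eq_const {γ g : C(I, E)} {x : E}
    (h : γ - volterra g = ContinuousLinearMap.const ℝ I x) : γ 0 = x := by
  simpa [volterra_apply] using DFunLike.congr_fun h 0

variable [CompleteSpace E]

theorem isInvertible_one_sub_volterra_comp (A : C(I, E →L[ℝ] E)) :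
    (1 - volterra ∘L pointwiseApply A).IsInvertible := by
  obtain ⟨n, hn⟩ :=
    ((FloorSemiring.tendsto_pow_div_factorial_atTop ‖A‖).eventually_lt_const zero_lt_one).exists
  obtain ⟨T, hT⟩ :=
    isUnit_one_sub_of_norm_pow_lt_one (R := C(I, E) →L[ℝ] C(I, E))
      ((norm_volterra_comp_pow_le A n).trans_lt hn)
  exact ⟨.ofUnit T, hT⟩

theorem hasDerivWithinAt_IccExtend {γ g : C(I, E)} {x : E}
    (h : γ - volterra g = ContinuousLinearMap.const ℝ I x) (t : I) :
    HasDerivWithinAt (IccExtend zero_le_one γ) (g t) (Icc 0 1) t := by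
  have hprim : HasDerivAt (fun r : ℝ => x + ∫ q in (0 : ℝ)..r, IccExtend zero_le_one g q)
      (IccExtend zero_le_one g t) t :=
    (g.continuous.Icc_extend'.integral_hasStrictDerivAt 0 t).hasDerivAt.const_add x
  rw [IccExtend_val] at hprim
  have hγ : EqOn (IccExtend zero_le_one γ)
      (fun r : ℝ => x + ∫ q in (0 : ℝ)..r, IccExtend zero_le_one g q) (Icc 0 1) := fun r hr => by
    rw [IccExtend_of_mem _ _ hr, ← sub_eq_iff_eq_add]
    exact DFunLike.congr_fun h ⟨r, hr⟩
  exact hprim.hasDerivWithinAt.congr hγ (hγ t.2)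

theorem volterra_const_apply_one (x : E) :
    volterra (ContinuousLinearMap.const ℝ I x) 1 = x := by
  simp [volterra_apply, IccExtend]

theorem compLeftContinuous_volterra {F : Type*} [NormedAddCommGroup F] [NormedSpace ℝ F]
    [CompleteSpace F] (L : E →L[ℝ] F) (g : C(I, E)) :
    L.compLeftContinuous ℝ I (volterra g) = volterra (L.compLeftContinuous ℝ I g) := by
  ext t
  exact (L.intervalIntegral_comp_comm (g.continuous.Icc_extend'.intervalIntegrable 0 t)).symm

theorem map_apply_of_sub_volterra_eq_const {F : Type*} [NormedAddCommGroup F] [NormedSpace ℝ F]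
    [CompleteSpace F] {γ g : C(I, E)} {x : E}
    (h : γ - volterra g = ContinuousLinearMap.const ℝ I x) {L : E →L[ℝ] F}
    (hL : ∀ t, L (g t) = 0) (t : I) : L (γ t) = L x := by
  have hLg : L.compLeftContinuous ℝ I g = 0 := ContinuousMap.ext hL
  have hLγ := congrArg (L.compLeftContinuous ℝ I) h
  rw [map_sub, compLeftContinuous_volterra, hLg, map_zero, sub_zero] at hLγ
  exact DFunLike.congr_fun hLγ t

end Volterra

section InverseFunction

open scoped ContDiff

variable {E F : Type*} [NormedAddCommGroup E] [NormedSpace ℝ E] [NormedAddCommGroup F]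
  [NormedSpace ℝ F] {f : E → F} {s : Set E} {p : E}

theorem exists_openPartialHomeomorph_of_isInvertible_fderiv [CompleteSpace E] (hs : IsOpen s)
    (hf : ContDiffOn ℝ ∞ f s) (hp : p ∈ s) (hinv : (fderiv ℝ f p).IsInvertible) :
    ∃ Φ : OpenPartialHomeomorph E F, ⇑Φ = f ∧ p ∈ Φ.source ∧ Φ.source ⊆ s ∧
      ContDiffOn ℝ ∞ Φ.symm Φ.target := by
  obtain ⟨A, hA⟩ := hinv
  have hfp : ContDiffAt ℝ ∞ f p := hf.contDiffAt (hs.mem_nhds hp)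
  have hfA : HasFDerivAt f (A : E →L[ℝ] F) p :=
    hA ▸ (hfp.differentiableAt (by simp)).hasFDerivAt
  let t := s ∩ fderiv ℝ f ⁻¹' range ((↑) : (E ≃L[ℝ] F) → E →L[ℝ] F)
  have ht : IsOpen t := (hf.continuousOn_fderiv_of_isOpen hs (by simp)).isOpen_inter_preimage hs
    ContinuousLinearEquiv.isOpen
  let Φ := (hfp.toOpenPartialHomeomorph f hfA (by simp)).restrOpen t ht
  have hΦ : ⇑Φ = f := rfl
  have hΦt : Φ.source ⊆ t := inter_subset_right
  refine ⟨Φ, hΦ, ⟨hfp.mem_toOpenPartialHomeomorph_source hfA (by simp), hp, A, hA⟩,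
    hΦt.trans inter_subset_left, fun z hz => ?_⟩
  obtain ⟨hys, B, hB⟩ := hΦt (Φ.map_target hz)
  have hfy : ContDiffAt ℝ ∞ f (Φ.symm z) := hf.contDiffAt (hs.mem_nhds hys)
  exact (Φ.contDiffAt_symm hz (hB ▸ (hfy.differentiableAt (by simp)).hasFDerivAt)
    hfy).contDiffWithinAt

theorem fderiv_symm_apply_fderiv_of_contDiffOn {Φ : OpenPartialHomeomorph E F} (hp : p ∈ Φ.source)
    (hΦ : ContDiffOn ℝ 1 Φ Φ.source) (hΦs : ContDiffOn ℝ 1 Φ.symm Φ.target) (v : E) :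
    fderiv ℝ Φ.symm (Φ p) (fderiv ℝ Φ p v) = v := by
  have hd := (hΦ.contDiffAt (Φ.open_source.mem_nhds hp)).differentiableAt one_ne_zero
  have hds := (hΦs.contDiffAt (Φ.open_target.mem_nhds (Φ.map_source hp))).differentiableAt
    one_ne_zero
  have hid := (hasFDerivAt_id (𝕜 := ℝ) p).congr_of_eventuallyEq (Φ.eventually_left_inverse hp)
  exact DFunLike.congr_fun ((hds.hasFDerivAt.comp p hd.hasFDerivAt).unique hid) v

theorem bijective_fderiv_of_contDiffOn_symm {Φ : OpenPartialHomeomorph E F} (hp : p ∈ Φ.source)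
    (hΦ : ContDiffOn ℝ 1 Φ Φ.source) (hΦs : ContDiffOn ℝ 1 Φ.symm Φ.target) :
    Function.Bijective (fderiv ℝ Φ p) := by
  refine Function.bijective_iff_has_inverse.2 ⟨fderiv ℝ Φ.symm (Φ p),
    fderiv_symm_apply_fderiv_of_contDiffOn hp hΦ hΦs, fun w => ?_⟩
  simpa [Φ.left_inv hp] using
    fderiv_symm_apply_fderiv_of_contDiffOn (Φ := Φ.symm) (Φ.map_source hp) hΦs hΦ w

end InverseFunction

section Flow

open scoped ContDiff unitInterval

variable {E : Type u} [NormedAddCommGroup E] [NormedSpace ℝ E] {X : E → E} {s : Set E}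
  {γ : C(I, E)}

/-- The residual of the Picard integral equation: `picardResidual X γ` is the constant map `x` iff
`γ` is the integral curve of the vector field `X` on `[0, 1]` that starts at `x`. -/
noncomputable def picardResidual (X : E → E) (γ : C(I, E)) : C(I, E) :=
  γ - volterra (nemytskii X γ)

theorem contDiffOn_picardResidual (hs : IsOpen s) (hX : ContDiffOn ℝ ∞ X s) :
    ContDiffOn ℝ ∞ (picardResidual X) {γ | ∀ t, γ t ∈ s} :=
  contDiffOn_id.sub (volterra.contDiff.comp_contDiffOn (contDiffOn_nemytskii hs hX))

theorem hasFDerivAt_picardResidual (hs : IsOpen s) (hX : ContDiffOn ℝ 1 X s)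
    (hγ : ∀ t, γ t ∈ s) :
    HasFDerivAt (picardResidual X)
      (1 - volterra ∘L pointwiseApply (nemytskii (fderiv ℝ X) γ)) γ :=
  (hasFDerivAt_id γ).sub ((volterra (E := E)).hasFDerivAt.comp γ (hasFDerivAt_nemytskii hs hX hγ))

theorem exists_contDiffOn_picardResidual_eq_const [CompleteSpace E] (hs : IsOpen s)
    (hX : ContDiffOn ℝ ∞ X s) (hγ : ∀ t, γ t ∈ s) {x₀ : E}
    (hx₀ : picardResidual X γ = ContinuousLinearMap.const ℝ I x₀) :
    ∃ O : Set E, IsOpen O ∧ x₀ ∈ O ∧ ∃ c : E → C(I, E), ContDiffOn ℝ ∞ c O ∧ c x₀ = γ ∧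
      ∀ x ∈ O, (∀ t, c x t ∈ s) ∧ picardResidual X (c x) = ContinuousLinearMap.const ℝ I x := by
  have hinv : (fderiv ℝ (picardResidual X) γ).IsInvertible := by
    rw [(hasFDerivAt_picardResidual hs (hX.of_le (by simp)) hγ).fderiv]
    exact isInvertible_one_sub_volterra_comp _
  obtain ⟨Φ, hΦ, hγΦ, hΦs, hsymm⟩ := exists_openPartialHomeomorph_of_isInvertible_fderiv
    (isOpen_setOf_forall_mem hs) (contDiffOn_picardResidual hs hX) hγ hinv
  let const := ContinuousLinearMap.const (M := E) ℝ I
  refine ⟨const ⁻¹' Φ.target, Φ.open_target.preimage const.continuous, ?_,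
    Φ.symm ∘ const, hsymm.comp const.contDiff.contDiffOn (mapsTo_preimage _ _), ?_, fun x hx =>
      ⟨hΦs (Φ.map_target hx), ?_⟩⟩
  · rw [mem_preimage, ← hx₀, ← hΦ]
    exact Φ.map_source hγΦ
  · rw [Function.comp_apply, ← hx₀, ← hΦ, Φ.left_inv hγΦ]
  · rw [← hΦ, Function.comp_apply, Φ.right_inv hx]

theorem fderiv_sub_volterra_eq_const {c : E → C(I, E)} {x : E} (hs : IsOpen s)
    (hX : ContDiffOn ℝ 1 X s) (hc : DifferentiableAt ℝ c x) (hcs : ∀ t, c x t ∈ s)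
    (hcX : picardResidual X ∘ c =ᶠ[𝓝 x] ContinuousLinearMap.const ℝ I) (w : E) :
    fderiv ℝ c x w - volterra (pointwiseApply (nemytskii (fderiv ℝ X) (c x)) (fderiv ℝ c x w)) =
      ContinuousLinearMap.const ℝ I w := by
  have hconst : HasFDerivAt (picardResidual X ∘ c) (ContinuousLinearMap.const ℝ I) x :=
    (ContinuousLinearMap.const (M := E) ℝ I).hasFDerivAt.congr_of_eventuallyEq hcX
  exact DFunLike.congr_fun
    (((hasFDerivAt_picardResidual hs hX hcs).comp x hc.hasFDerivAt).unique hconst) w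

end Flow

section OneForm

variable {E F : Type*} [NormedAddCommGroup E] [NormedSpace ℝ E] [NormedAddCommGroup F]
  [NormedSpace ℝ F] {η : E → E →L[ℝ] ℝ} {y : E}

/-- The exterior derivative `dη_y(a, b)` of a `1`-form. -/
noncomputable def oneFormExtDeriv (η : E → E →L[ℝ] ℝ) (y a b : E) : ℝ :=
  fderiv ℝ η y a b - fderiv ℝ η y b a

/-- The `3`-form `(η ∧ dη)_y(a, b, c)` of a `1`-form, written as a cyclic sum. -/
noncomputable def wedgeExtDeriv (η : E → E →L[ℝ] ℝ) (y a b c : E) : ℝ :=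
  η y a * oneFormExtDeriv η y b c + η y b * oneFormExtDeriv η y c a +
    η y c * oneFormExtDeriv η y a b

/-- The pullback `u^*η` of a `1`-form along a map. -/
noncomputable def oneFormPullback (u : E → F) (η : F → F →L[ℝ] ℝ) (y : E) : E →L[ℝ] ℝ :=
  η (u y) ∘L fderiv ℝ u y

theorem hasFDerivAt_oneFormPullback {u : E → F} {η : F → F →L[ℝ] ℝ} (hu : ContDiffAt ℝ 2 u y)
    (hη : DifferentiableAt ℝ η (u y)) :
    HasFDerivAt (oneFormPullback u η)
      (ContinuousLinearMap.compL ℝ E F ℝ (η (u y)) ∘L fderiv ℝ (fderiv ℝ u) y +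
        (ContinuousLinearMap.compL ℝ E F ℝ).flip (fderiv ℝ u y) ∘L
          (fderiv ℝ η (u y) ∘L fderiv ℝ u y)) y :=
  (hη.hasFDerivAt.comp y (hu.differentiableAt two_ne_zero).hasFDerivAt).clm_comp
    ((hu.fderiv_right (m := 1) le_rfl).differentiableAt one_ne_zero).hasFDerivAt

theorem oneFormExtDeriv_oneFormPullback {u : E → F} {η : F → F →L[ℝ] ℝ}
    (hu : ContDiffAt ℝ 2 u y) (hη : DifferentiableAt ℝ η (u y)) (a b : E) :
    oneFormExtDeriv (oneFormPullback u η) y a b =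
      oneFormExtDeriv η (u y) (fderiv ℝ u y a) (fderiv ℝ u y b) := by
  have hsymm : fderiv ℝ (fderiv ℝ u) y a b = fderiv ℝ (fderiv ℝ u) y b a :=
    (hu.isSymmSndFDerivAt (by simp)).eq a b
  simp [oneFormExtDeriv, (hasFDerivAt_oneFormPullback hu hη).fderiv, hsymm]

theorem wedgeExtDeriv_oneFormPullback {u : E → F} {η : F → F →L[ℝ] ℝ}
    (hu : ContDiffAt ℝ 2 u y) (hη : DifferentiableAt ℝ η (u y)) (a b c : E) :
    wedgeExtDeriv (oneFormPullback u η) y a b c =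
      wedgeExtDeriv η (u y) (fderiv ℝ u y a) (fderiv ℝ u y b) (fderiv ℝ u y c) := by
  simp only [wedgeExtDeriv, oneFormExtDeriv_oneFormPullback hu hη, oneFormPullback,
    ContinuousLinearMap.comp_apply]

theorem wedgeExtDeriv_smul {f : E → ℝ} (hf : DifferentiableAt ℝ f y)
    (hη : DifferentiableAt ℝ η y) (a b c : E) :
    wedgeExtDeriv (f • η) y a b c = f y ^ 2 * wedgeExtDeriv η y a b c := by
  simp only [wedgeExtDeriv, oneFormExtDeriv, (hf.hasFDerivAt.smul hη.hasFDerivAt).fderiv,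
    Pi.smul_apply', add_apply, smul_apply,
    ContinuousLinearMap.smulRight_apply, smul_eq_mul]
  ring

theorem wedgeExtDeriv_congr {η' : E → E →L[ℝ] ℝ} (h : η =ᶠ[𝓝 y] η')
    (a b c : E) : wedgeExtDeriv η y a b c = wedgeExtDeriv η' y a b c := by
  simp only [wedgeExtDeriv, oneFormExtDeriv, h.fderiv_eq, h.eq_of_nhds]

theorem wedgeExtDeriv_eq_zero_of_eq_smul_oneFormPullback {u : E → F} {f : E → ℝ} {ℓ : F →L[ℝ] ℝ}
    (hu : ContDiffAt ℝ 2 u y) (hf : DifferentiableAt ℝ f y)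
    (h : η =ᶠ[𝓝 y] f • oneFormPullback u fun _ => ℓ) (a b c : E) : wedgeExtDeriv η y a b c = 0 := by
  have hℓ : DifferentiableAt ℝ (fun _ : F => ℓ) (u y) := differentiableAt_const ℓ
  rw [wedgeExtDeriv_congr h,
    wedgeExtDeriv_smul hf (hasFDerivAt_oneFormPullback hu hℓ).differentiableAt,
    wedgeExtDeriv_oneFormPullback hu hℓ]
  simp [wedgeExtDeriv, oneFormExtDeriv]

theorem continuousOn_oneFormExtDeriv {s : Set E} (hs : IsOpen s) (hη : ContDiffOn ℝ 1 η s)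
    {X Y : E → E} (hX : ContinuousOn X s) (hY : ContinuousOn Y s) :
    ContinuousOn (fun y => oneFormExtDeriv η y (X y) (Y y)) s := by
  have hη' : ContinuousOn (fderiv ℝ η) s := hη.continuousOn_fderiv_of_isOpen hs le_rfl
  exact ((hη'.clm_apply hX).clm_apply hY).sub ((hη'.clm_apply hY).clm_apply hX)

theorem fderiv_apply_add_apply_fderiv {Y : E → E} (hη : DifferentiableAt ℝ η y)
    (hY : DifferentiableAt ℝ Y y) (hηY : ∀ᶠ z in 𝓝 y, η z (Y z) = 0) (b : E) :
    fderiv ℝ η y (Y y) b + η y (fderiv ℝ Y y b) = oneFormExtDeriv η y (Y y) b := by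
  have hzero : HasFDerivAt (fun z => η z (Y z)) (0 : E →L[ℝ] ℝ) y :=
    (hasFDerivAt_const 0 y).congr_of_eventuallyEq hηY
  have hb := DFunLike.congr_fun ((hη.hasFDerivAt.clm_apply hY.hasFDerivAt).unique hzero) b
  simp only [add_apply, ContinuousLinearMap.comp_apply,
    ContinuousLinearMap.flip_apply, zero_apply] at hb
  rw [oneFormExtDeriv]
  linarith

theorem oneFormExtDeriv_eq_div_mul {a e : E} (hw : ∀ b c, wedgeExtDeriv η y e b c = 0)
    (ha : η y a = 0) (he : η y e ≠ 0) (b : E) :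
    oneFormExtDeriv η y a b = oneFormExtDeriv η y a e / η y e * η y b := by
  have hwab := hw a b
  have hanti : oneFormExtDeriv η y e a = -oneFormExtDeriv η y a e := by simp [oneFormExtDeriv]
  rw [wedgeExtDeriv, ha, hanti] at hwab
  field_simp
  linarith

theorem apply_eq_zero_of_hasDerivWithinAt {s : Set E} {Y : E → E} {e : E} {c r : ℝ → E}
    {a b : ℝ} (hs : IsOpen s) (hη : ContDiffOn ℝ 1 η s)
    (hw : ∀ y ∈ s, ∀ v₀ v₁ v₂, wedgeExtDeriv η y v₀ v₁ v₂ = 0) (he : ∀ y ∈ s, η y e ≠ 0)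
    (hY : DifferentiableOn ℝ Y s) (hηY : ∀ y ∈ s, η y (Y y) = 0) (hcs : ∀ t ∈ Icc a b, c t ∈ s)
    (hc : ∀ t ∈ Icc a b, HasDerivWithinAt c (Y (c t)) (Icc a b) t)
    (hr : ∀ t ∈ Icc a b, HasDerivWithinAt r (fderiv ℝ Y (c t) (r t)) (Icc a b) t)
    (ha : η (c a) (r a) = 0) : ∀ t ∈ Icc a b, η (c t) (r t) = 0 := by
  let k : E → ℝ := fun y => oneFormExtDeriv η y (Y y) e / η y e
  have hk : ContinuousOn (k ∘ c) (Icc a b) :=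
    ((continuousOn_oneFormExtDeriv hs hη hY.continuousOn continuousOn_const).div
      (hη.continuousOn.clm_apply continuousOn_const) he).comp
      (fun t ht => (hc t ht).continuousWithinAt) hcs
  obtain ⟨M, hM⟩ := isCompact_Icc.exists_bound_of_continuousOn hk
  have hderiv : ∀ t ∈ Icc a b,
      HasDerivWithinAt (fun t => η (c t) (r t)) (k (c t) * η (c t) (r t)) (Icc a b) t := by
    intro t ht
    have hct := hs.mem_nhds (hcs t ht)
    have hηt : DifferentiableAt ℝ η (c t) := (hη.contDiffAt hct).differentiableAt one_ne_zero
    rw [← oneFormExtDeriv_eq_div_mul (fun _ _ => hw _ (hcs t ht) ..) (hηY _ (hcs t ht))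
      (he _ (hcs t ht)), ← fderiv_apply_add_apply_fderiv hηt (hY.differentiableAt hct)
      (eventually_of_mem hct hηY)]
    exact (hηt.hasFDerivAt.comp_hasDerivWithinAt t (hc t ht)).clm_apply (hr t ht)
  refine eq_zero_of_abs_deriv_le_mul_abs_self_of_eq_zero_right (K := M)
    (f' := fun t => k (c t) * η (c t) (r t)) (fun t ht => (hderiv t ht).continuousWithinAt)
    (fun t ht => (hderiv t (Ico_subset_Icc_self ht)).mono_of_mem_nhdsWithin
      (Icc_mem_nhdsGE_of_mem ht)) ha fun t ht => ?_
  rw [norm_mul]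
  exact mul_le_mul_of_nonneg_right (hM t (Ico_subset_Icc_self ht)) (norm_nonneg _)

theorem sum_perm_fin_three {M : Type*} [AddCommMonoid M] (g : Equiv.Perm (Fin 3) → M) :
    ∑ σ, g σ = g 1 + (g (Equiv.swap 0 1) + (g (Equiv.swap 0 2) + (g (Equiv.swap 1 2) +
      (g (Equiv.swap 0 1 * Equiv.swap 1 2) + g (Equiv.swap 1 2 * Equiv.swap 0 1))))) := by
  have huniv : (Finset.univ : Finset (Equiv.Perm (Fin 3))) =
      {1, Equiv.swap 0 1, Equiv.swap 0 2, Equiv.swap 1 2, Equiv.swap 0 1 * Equiv.swap 1 2,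
        Equiv.swap 1 2 * Equiv.swap 0 1} := by decide
  rw [huniv]
  repeat rw [Finset.sum_insert (by decide)]
  rw [Finset.sum_singleton]

end OneForm

section Frobenius

open scoped ContDiff unitInterval

variable {E : Type u} [NormedAddCommGroup E] [NormedSpace ℝ E]

theorem apply_fderiv_eq_zero_of_picardResidual [CompleteSpace E] {η : E → E →L[ℝ] ℝ}
    {Y : E → E} {s : Set E} {e x w : E} {c : E → C(I, E)} (hs : IsOpen s)
    (hη : ContDiffOn ℝ 1 η s) (hw : ∀ y ∈ s, ∀ v₀ v₁ v₂, wedgeExtDeriv η y v₀ v₁ v₂ = 0)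
    (he : ∀ y ∈ s, η y e ≠ 0) (hY : ContDiffOn ℝ 1 Y s) (hηY : ∀ y ∈ s, η y (Y y) = 0)
    (hc : DifferentiableAt ℝ c x) (hcs : ∀ t, c x t ∈ s)
    (hcY : picardResidual Y ∘ c =ᶠ[𝓝 x] ContinuousLinearMap.const ℝ I) (hx : η x w = 0) (t : I) :
    η (c x t) (fderiv ℝ c x w t) = 0 := by
  have hcurve : c x - volterra (nemytskii Y (c x)) = ContinuousLinearMap.const ℝ I x :=
    hcY.eq_of_nhds
  have hvar := fderiv_sub_volterra_eq_const hs hY hc hcs hcY w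
  have hzero := apply_eq_zero_of_hasDerivWithinAt (c := IccExtend zero_le_one (c x))
    (r := IccExtend zero_le_one (fderiv ℝ c x w)) hs hη hw he (hY.differentiableOn one_ne_zero) hηY
    (fun t _ => hcs (projIcc 0 1 zero_le_one t))
    (fun t ht => by
      have h := hasDerivWithinAt_IccExtend hcurve ⟨t, ht⟩
      rwa [nemytskii_apply hY.continuousOn hcs, ← IccExtend_of_mem zero_le_one (c x) ht] at h)
    (fun t ht => by
      have h := hasDerivWithinAt_IccExtend hvar ⟨t, ht⟩
      rwa [pointwiseApply_apply, nemytskii_apply (hY.continuousOn_fderiv_of_isOpen hs le_rfl) hcs,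
        ← IccExtend_of_mem zero_le_one (c x) ht,
        ← IccExtend_of_mem zero_le_one (fderiv ℝ c x w) ht] at h)
    (by
      rw [IccExtend_left, IccExtend_left]
      exact (apply_zero_of_sub_volterra_eq_const hcurve).symm ▸
        (apply_zero_of_sub_volterra_eq_const hvar).symm ▸ hx) t t.2
  rwa [IccExtend_val, IccExtend_val] at hzero

/-- The vector field on `E × E` whose integral curve from `(a, y)` freezes `a` and moves `y` along
the projection `η(e) a - η(a) e` of `a` to the kernel of `η`. -/
def frobeniusField (η : E → E →L[ℝ] ℝ) (e : E) (p : E × E) : E × E :=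
  (0, η p.2 e • p.1 - η p.2 p.1 • e)

variable {η : E → E →L[ℝ] ℝ} {W : Set E} {e x : E}

theorem contDiffOn_frobeniusField (hη : ContDiffOn ℝ ∞ η W) :
    ContDiffOn ℝ ∞ (frobeniusField η e) (Prod.snd ⁻¹' W) := by
  have hη₂ : ContDiffOn ℝ ∞ (fun p : E × E => η p.2) (Prod.snd ⁻¹' W) :=
    hη.comp contDiffOn_snd (mapsTo_preimage _ _)
  exact contDiffOn_const.prodMk (((hη₂.clm_apply contDiffOn_const).smul contDiffOn_fst).sub
    ((hη₂.clm_apply contDiffOn_fst).smul contDiffOn_const))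

theorem fderiv_frobeniusField_zero (hη : DifferentiableAt ℝ η x) (v : E × E) :
    fderiv ℝ (frobeniusField η e) (0, x) v = (0, η x e • v.1 - η x v.1 • e) := by
  have hη₂ : HasFDerivAt (fun p : E × E => η p.2) (fderiv ℝ η x ∘L .snd ℝ E E) (0, x) :=
    hη.hasFDerivAt.comp ((0, x) : E × E) hasFDerivAt_snd
  have h : HasFDerivAt (frobeniusField η e) _ (0, x) :=
    (hasFDerivAt_const 0 _).prodMk
      (((hη₂.clm_apply (hasFDerivAt_const e _)).smul hasFDerivAt_fst).sub
        ((hη₂.clm_apply hasFDerivAt_fst).smul (hasFDerivAt_const e _)))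
  simp [h.fderiv]

theorem picardResidual_frobeniusField_const_zero (hη : ContDiffOn ℝ ∞ η W) (hx : x ∈ W) :
    picardResidual (frobeniusField η e) (ContinuousLinearMap.const ℝ I (0, x)) =
      ContinuousLinearMap.const ℝ I (0, x) := by
  have hrest : nemytskii (frobeniusField η e) (ContinuousLinearMap.const ℝ I (0, x)) = 0 := by
    ext1 t
    rw [nemytskii_apply (contDiffOn_frobeniusField hη).continuousOn (fun _ => hx)]
    simp [frobeniusField]
  rw [picardResidual, hrest, map_zero, sub_zero]

theorem fderiv_apply_one_of_picardResidual_frobeniusField [CompleteSpace E]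
    {c : E × E → C(I, E × E)} (hW : IsOpen W) (hη : ContDiffOn ℝ ∞ η W) (hx : x ∈ W)
    (hc : DifferentiableAt ℝ c (0, x)) (hcx : c (0, x) = ContinuousLinearMap.const ℝ I (0, x))
    (hcY : picardResidual (frobeniusField η e) ∘ c =ᶠ[𝓝 (0, x)] ContinuousLinearMap.const ℝ I)
    (w : E × E) :
    fderiv ℝ c (0, x) w 1 = w + (0, η x e • w.1 - η x w.1 • e) := by
  have hs : IsOpen (Prod.snd ⁻¹' W : Set (E × E)) := hW.preimage continuous_snd
  have hY : ContDiffOn ℝ 1 (frobeniusField η e) (Prod.snd ⁻¹' W) :=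
    (contDiffOn_frobeniusField hη).of_le (by simp)
  have hcs : ∀ t, c (0, x) t ∈ (Prod.snd ⁻¹' W : Set (E × E)) := fun _ => hcx ▸ hx
  have hηx : DifferentiableAt ℝ η x := (hη.contDiffAt (hW.mem_nhds hx)).differentiableAt (by simp)
  have hvar := fderiv_sub_volterra_eq_const hs hY hc hcs hcY w
  set g := pointwiseApply (nemytskii (fderiv ℝ (frobeniusField η e)) (c (0, x)))
    (fderiv ℝ c (0, x) w) with hg
  have hg_apply : ∀ t, g t = (0, η x e • (fderiv ℝ c (0, x) w t).1 -
      η x (fderiv ℝ c (0, x) w t).1 • e) := fun t => by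
    rw [hg, pointwiseApply_apply, nemytskii_apply (hY.continuousOn_fderiv_of_isOpen hs le_rfl) hcs,
      hcx]
    exact fderiv_frobeniusField_zero hηx _
  have hfst : ∀ t, (fderiv ℝ c (0, x) w t).1 = w.1 := map_apply_of_sub_volterra_eq_const hvar
    (L := .fst ℝ E E) fun t => by simp [hg_apply]
  have hg_const : g = ContinuousLinearMap.const ℝ I (0, η x e • w.1 - η x w.1 • e) := by
    ext1 t
    rw [hg_apply, hfst]
    rfl
  rw [hg_const, sub_eq_iff_eq_add] at hvar
  rw [hvar, ContinuousMap.add_apply, volterra_const_apply_one]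
  rfl

theorem oneFormPullback_snd_apply (p v : E × E) :
    oneFormPullback Prod.snd η p v = η p.2 v.2 := by
  simp [oneFormPullback, fderiv_snd]

theorem contDiffOn_oneFormPullback_snd (hη : ContDiffOn ℝ 1 η W) :
    ContDiffOn ℝ 1 (oneFormPullback Prod.snd η) (Prod.snd ⁻¹' W : Set (E × E)) := by
  have hsnd : oneFormPullback Prod.snd η = fun p : E × E => η p.2 ∘L .snd ℝ E E :=
    funext fun p => ContinuousLinearMap.ext fun v => oneFormPullback_snd_apply p v
  rw [hsnd]
  exact (hη.comp contDiffOn_snd (mapsTo_preimage _ _)).clm_comp contDiffOn_const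

theorem snd_fderiv_mem_ker_of_picardResidual_frobeniusField [CompleteSpace E]
    {c : E × E → C(I, E × E)} {p w : E × E} (hW : IsOpen W) (hη : ContDiffOn ℝ ∞ η W)
    (hw : ∀ y ∈ W, ∀ v₀ v₁ v₂, wedgeExtDeriv η y v₀ v₁ v₂ = 0) (he : ∀ y ∈ W, η y e ≠ 0)
    (hc : DifferentiableAt ℝ c p) (hcs : ∀ t, (c p t).2 ∈ W)
    (hcY : picardResidual (frobeniusField η e) ∘ c =ᶠ[𝓝 p] ContinuousLinearMap.const ℝ I)
    (hp : η p.2 w.2 = 0) (t : I) : η (c p t).2 (fderiv ℝ c p w t).2 = 0 := by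
  rw [← oneFormPullback_snd_apply] at hp ⊢
  refine apply_fderiv_eq_zero_of_picardResidual (e := (0, e)) (hW.preimage continuous_snd)
    (contDiffOn_oneFormPullback_snd (hη.of_le (by simp))) (fun q hq v₀ v₁ v₂ => ?_)
    (fun q hq => ?_) ((contDiffOn_frobeniusField hη).of_le (by simp)) (fun q _ => ?_) hc hcs hcY hp
    t
  · rw [wedgeExtDeriv_oneFormPullback contDiffAt_snd
      ((hη.contDiffAt (hW.mem_nhds hq)).differentiableAt (by simp))]
    exact hw _ hq ..
  · rw [oneFormPullback_snd_apply]
    exact he _ hq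
  · rw [oneFormPullback_snd_apply]
    simp [frobeniusField, mul_comm]

theorem exists_contDiffOn_fderiv_mapsTo_ker [CompleteSpace E] (hW : IsOpen W)
    (hη : ContDiffOn ℝ ∞ η W) (hw : ∀ y ∈ W, ∀ v₀ v₁ v₂, wedgeExtDeriv η y v₀ v₁ v₂ = 0)
    (he : ∀ y ∈ W, η y e ≠ 0) (hx : x ∈ W) (hxe : η x e = 1) :
    ∃ O : Set E, IsOpen O ∧ 0 ∈ O ∧ ∃ Φ : E → E, ContDiffOn ℝ ∞ Φ O ∧ Φ 0 = x ∧
      fderiv ℝ Φ 0 = .id ℝ E ∧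
      ∀ v ∈ O, Φ v ∈ W ∧ ∀ w, η x w = 0 → η (Φ v) (fderiv ℝ Φ v w) = 0 := by
  obtain ⟨O, hO, hxO, c, hc, hcx, hcO⟩ := exists_contDiffOn_picardResidual_eq_const
    (hW.preimage continuous_snd) (contDiffOn_frobeniusField hη) (fun _ => hx)
    (picardResidual_frobeniusField_const_zero (e := e) hη hx)
  have hcY : ∀ p ∈ O, picardResidual (frobeniusField η e) ∘ c =ᶠ[𝓝 p]
      ContinuousLinearMap.const ℝ I := fun p hp =>
    eventually_of_mem (hO.mem_nhds hp) fun q hq => (hcO q hq).2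
  have hcd : ∀ p ∈ O, DifferentiableAt ℝ c p := fun p hp =>
    (hc.contDiffAt (hO.mem_nhds hp)).differentiableAt (by simp)
  let A : E →L[ℝ] E × E := (.id ℝ E - (η x).smulRight e).prod ((η x).smulRight e)
  let ι : E → E × E := fun v => (0, x) + A v
  let S : C(I, E × E) →L[ℝ] E := .snd ℝ E E ∘L ContinuousMap.evalCLM ℝ 1
  have hι : ContDiff ℝ ∞ ι := contDiff_const.add A.contDiff
  have hι0 : ι 0 = (0, x) := by simp [ι]
  have hΦ : ∀ v ∈ ι ⁻¹' O, fderiv ℝ (S ∘ c ∘ ι) v = S ∘L fderiv ℝ c (ι v) ∘L A := fun v hv =>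
    (S.hasFDerivAt.comp v ((hcd _ hv).hasFDerivAt.comp v (A.hasFDerivAt.const_add _))).fderiv
  have h0 : (0 : E) ∈ ι ⁻¹' O := by rwa [mem_preimage, hι0]
  refine ⟨ι ⁻¹' O, hO.preimage hι.continuous, h0, S ∘ c ∘ ι,
    S.contDiff.comp_contDiffOn (hc.comp hι.contDiffOn (mapsTo_preimage _ _)), ?_, ?_,
    fun v hv => ⟨(hcO _ hv).1 1, fun w hxw => ?_⟩⟩
  · simp [hι0, hcx, S]
  · ext w
    rw [hΦ 0 h0, hι0]
    change (fderiv ℝ c (0, x) (A w) 1).2 = w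
    rw [fderiv_apply_one_of_picardResidual_frobeniusField hW hη hx (hcd _ hxO) hcx (hcY _ hxO)]
    simp [A, hxe]
  · rw [hΦ v hv]
    refine snd_fderiv_mem_ker_of_picardResidual_frobeniusField hW hη hw he (hcd _ hv)
      (hcO _ hv).1 (hcY _ hv) (w := A w) ?_ 1
    simp [A, hxw]

theorem exists_openPartialHomeomorph_eq_smul_oneFormPullback [CompleteSpace E] (hW : IsOpen W)
    (hη : ContDiffOn ℝ ∞ η W) (hw : ∀ y ∈ W, ∀ v₀ v₁ v₂, wedgeExtDeriv η y v₀ v₁ v₂ = 0)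
    (hx : x ∈ W) (hηx : η x ≠ 0) :
    ∃ u : OpenPartialHomeomorph E E, x ∈ u.source ∧ u.source ⊆ W ∧ ContDiffOn ℝ ∞ u u.source ∧
      ContDiffOn ℝ ∞ u.symm u.target ∧ ∃ f : E → ℝ, ContDiffOn ℝ ∞ f u.source ∧
        ∃ ℓ : E →L[ℝ] ℝ, ∀ y ∈ u.source, η y = f y • oneFormPullback u (fun _ => ℓ) y := by
  obtain ⟨e, hxe⟩ : ∃ e, η x e = 1 := by
    obtain ⟨v, hv⟩ := DFunLike.ne_iff.1 hηx
    exact ⟨(η x v)⁻¹ • v, by simpa using inv_mul_cancel₀ hv⟩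
  let W' := W ∩ (fun y => η y e) ⁻¹' {0}ᶜ
  have hW' : IsOpen W' := (hη.continuousOn.clm_apply continuousOn_const).isOpen_inter_preimage hW
    isOpen_compl_singleton
  obtain ⟨O, hO, h0, Φ, hΦ, hΦ0, hΦ', hker⟩ := exists_contDiffOn_fderiv_mapsTo_ker hW'
    (hη.mono inter_subset_left) (fun y hy => hw y hy.1) (fun y hy => hy.2)
    (x := x) ⟨hx, by simp [hxe]⟩ hxe
  obtain ⟨Ψ, rfl, h0Ψ, hΨO, hΨ⟩ :=
    exists_openPartialHomeomorph_of_isInvertible_fderiv hO hΦ h0 (hΦ' ▸ ⟨.refl ℝ E, rfl⟩)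
  have hΨW : Ψ.target ⊆ W := fun y hy =>
    Ψ.right_inv hy ▸ (hker _ (hΨO (Ψ.map_target hy))).1.1
  have hΨ₁ : ContDiffOn ℝ ∞ Ψ Ψ.source := hΦ.mono hΨO
  refine ⟨Ψ.symm, hΦ0 ▸ Ψ.map_source h0Ψ, hΨW, hΨ, hΨ₁,
    fun y => η y (fderiv ℝ Ψ (Ψ.symm y) e), ?_, η x, fun y hy => ?_⟩
  · exact (hη.mono hΨW).clm_apply (((hΨ₁.fderiv_of_isOpen Ψ.open_source (by simp)).comp hΨ
      Ψ.symm.mapsTo).clm_apply contDiffOn_const)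
  · ext b
    have hb := fderiv_symm_apply_fderiv_of_contDiffOn (Φ := Ψ.symm) hy (hΨ.of_le (by simp))
      (hΨ₁.of_le (by simp)) b
    set w := fderiv ℝ Ψ.symm y b with hw_def
    have hkerw := (hker _ (hΨO (Ψ.map_target hy))).2 (w - η x w • e) (by simp [hxe])
    rw [Ψ.symm_symm] at hb
    rw [Ψ.right_inv hy, map_sub, map_sub, hb, map_smul, map_smul, sub_eq_zero] at hkerw
    simp [oneFormPullback, ← hw_def, hkerw, mul_comm]

end Frobenius

section Multilinear

variable {E : Type*} [NormedAddCommGroup E] [NormedSpace ℝ E]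

/-- `HasConstantCoefficientsFormAt` on an arbitrary normed space: `ω = u^*c` near `x` for a local
diffeomorphism `u` and a constant `p`-form `c`. -/
def HasConstantCoefficientsAt (p : ℕ) (U : Set E) (ω : E → (E [×p]→L[ℝ] ℝ)) (x : E) : Prop :=
  ∃ V : Set E, IsOpen V ∧ x ∈ V ∧ V ⊆ U ∧
    ∃ u : E → E,
      ContDiffOn ℝ (⊤ : ℕ∞) u V ∧ Set.InjOn u V ∧ IsOpen (u '' V) ∧
      (∀ y ∈ V, Function.Bijective (fderiv ℝ u y)) ∧
      ∃ c : E [×p]→L[ℝ] ℝ, ∀ y ∈ V, ∀ v : Fin p → E, ω y v = c (fun i => fderiv ℝ u y (v i))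

/-- `HasConformalConstantCoefficientsFormAt` on an arbitrary normed space. -/
def HasConformalConstantCoefficientsAt (p : ℕ) (U : Set E) (ω : E → (E [×p]→L[ℝ] ℝ)) (x : E) :
    Prop :=
  ∃ V : Set E, IsOpen V ∧ x ∈ V ∧ V ⊆ U ∧
    ∃ f : E → ℝ, ContDiffOn ℝ (⊤ : ℕ∞) f V ∧
      ∃ ω' : E → (E [×p]→L[ℝ] ℝ),
        HasConstantCoefficientsAt p Set.univ ω' x ∧ ∀ y ∈ V, ω y = f y • ω' y

/-- A field of `1`-linear forms as a field of linear forms. -/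
noncomputable def oneFormOfMultilinear (ω : E → (E [×1]→L[ℝ] ℝ)) : E → E →L[ℝ] ℝ :=
  continuousMultilinearCurryFin1 ℝ E ℝ ∘ ω

theorem oneFormOfMultilinear_apply (ω : E → (E [×1]→L[ℝ] ℝ)) (y a : E) :
    oneFormOfMultilinear ω y a = ω y fun _ => a := by
  rw [oneFormOfMultilinear, Function.comp_apply, continuousMultilinearCurryFin1_apply]
  exact congrArg _ (funext fun i => by
    rw [Subsingleton.elim (α := Fin 1) i (Fin.last 0), Fin.snoc_last])

theorem apply_eq_oneFormOfMultilinear (ω : E → (E [×1]→L[ℝ] ℝ)) (y : E) (v : Fin 1 → E) :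
    ω y v = oneFormOfMultilinear ω y (v 0) := by
  rw [oneFormOfMultilinear_apply]
  exact congrArg _ (funext fun i => by rw [Subsingleton.elim i 0])

theorem fderiv_oneFormOfMultilinear_apply (ω : E → (E [×1]→L[ℝ] ℝ)) (y a b : E) :
    fderiv ℝ (oneFormOfMultilinear ω) y a b = fderiv ℝ ω y a fun _ => b := by
  rw [oneFormOfMultilinear, LinearIsometryEquiv.comp_fderiv]
  exact oneFormOfMultilinear_apply (fderiv ℝ ω y) a b

theorem half_mul_sum_perm_eq_wedgeExtDeriv (ω : E → (E [×1]→L[ℝ] ℝ)) (y : E) (v : Fin 3 → E) :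
    (1 / 2 : ℝ) * ∑ σ : Equiv.Perm (Fin 3),
      ((Equiv.Perm.sign σ : ℤ) : ℝ) * (ω y (fun _ => v (σ 0)) *
        (fderiv ℝ ω y (v (σ 1)) (fun _ => v (σ 2)) -
          fderiv ℝ ω y (v (σ 2)) (fun _ => v (σ 1)))) =
      wedgeExtDeriv (oneFormOfMultilinear ω) y (v 0) (v 1) (v 2) := by
  simp [sum_perm_fin_three, wedgeExtDeriv, oneFormExtDeriv, Equiv.swap_apply_def,
    oneFormOfMultilinear_apply, fderiv_oneFormOfMultilinear_apply]
  ring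

theorem exists_wedgeExtDeriv_eq_zero_of_hasConformalConstantCoefficientsAt {U : Set E}
    {ω : E → (E [×1]→L[ℝ] ℝ)} {x : E} (h : HasConformalConstantCoefficientsAt 1 U ω x) :
    ∃ W : Set E, IsOpen W ∧ x ∈ W ∧
      ∀ y ∈ W, ∀ v₀ v₁ v₂, wedgeExtDeriv (oneFormOfMultilinear ω) y v₀ v₁ v₂ = 0 := by
  obtain ⟨V, hV, hxV, -, f, hf, ω', ⟨V', hV', hxV', -, u, hu, -, -, -, c, hc⟩, hfω⟩ := h
  refine ⟨V ∩ V', hV.inter hV', ⟨hxV, hxV'⟩, fun y hy v₀ v₁ v₂ => ?_⟩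
  refine wedgeExtDeriv_eq_zero_of_eq_smul_oneFormPullback
    ((hu.contDiffAt (hV'.mem_nhds hy.2)).of_le ENat.LEInfty.out)
    ((hf.contDiffAt (hV.mem_nhds hy.1)).differentiableAt (by simp))
    (ℓ := continuousMultilinearCurryFin1 ℝ E ℝ c) ?_ v₀ v₁ v₂
  filter_upwards [(hV.inter hV').mem_nhds hy] with z hz
  ext a
  rw [oneFormOfMultilinear_apply, hfω z hz.1, smul_apply, hc z hz.2]
  exact congrArg (f z • ·) (oneFormOfMultilinear_apply (fun _ => c) z (fderiv ℝ u z a)).symm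

theorem hasConformalConstantCoefficientsAt_of_eq_smul_oneFormPullback {U : Set E}
    {ω : E → (E [×1]→L[ℝ] ℝ)} {x : E} {u : OpenPartialHomeomorph E E} (hx : x ∈ u.source)
    (hU : u.source ⊆ U) (hu : ContDiffOn ℝ (⊤ : ℕ∞) u u.source)
    (hu' : ContDiffOn ℝ (⊤ : ℕ∞) u.symm u.target) {f : E → ℝ}
    (hf : ContDiffOn ℝ (⊤ : ℕ∞) f u.source) {ℓ : E →L[ℝ] ℝ}
    (h : ∀ y ∈ u.source, oneFormOfMultilinear ω y = f y • oneFormPullback u (fun _ => ℓ) y) :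
    HasConformalConstantCoefficientsAt 1 U ω x := by
  let c := (continuousMultilinearCurryFin1 ℝ E ℝ).symm ℓ
  refine ⟨u.source, u.open_source, hx, hU, f, hf,
    fun y => c.compContinuousLinearMap fun _ => fderiv ℝ u y,
    ⟨u.source, u.open_source, hx, subset_univ _, u, hu, u.injOn,
      u.image_source_eq_target ▸ u.open_target,
      fun y hy => bijective_fderiv_of_contDiffOn_symm hy (hu.of_le (by simp))
        (hu'.of_le (by simp)), c, fun _ _ _ => rfl⟩, fun y hy => ?_⟩
  ext v
  rw [apply_eq_oneFormOfMultilinear, h y hy]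
  rfl

end Multilinear

theorem oneForm_conformalConstantCoefficients_iff_general {E : Type u} [NormedAddCommGroup E]
    [NormedSpace ℝ E] [CompleteSpace E] {U : Set E} (hU : IsOpen U) {ω : E → (E [×1]→L[ℝ] ℝ)}
    (hω : ContDiffOn ℝ (⊤ : ℕ∞) ω U) {x : E} (hx : x ∈ U) (hx0 : ω x ≠ 0) :
    HasConformalConstantCoefficientsAt 1 U ω x ↔
      ∃ W : Set E, IsOpen W ∧ x ∈ W ∧ ∀ y ∈ W, ∀ v : Fin 3 → E,
        (1 / 2 : ℝ) * ∑ σ : Equiv.Perm (Fin 3),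
          ((Equiv.Perm.sign σ : ℤ) : ℝ) * (ω y (fun _ => v (σ 0)) *
            (fderiv ℝ ω y (v (σ 1)) (fun _ => v (σ 2)) -
              fderiv ℝ ω y (v (σ 2)) (fun _ => v (σ 1)))) = 0 := by
  simp only [half_mul_sum_perm_eq_wedgeExtDeriv]
  constructor
  · intro h
    obtain ⟨W, hW, hxW, hw⟩ :=
      exists_wedgeExtDeriv_eq_zero_of_hasConformalConstantCoefficientsAt h
    exact ⟨W, hW, hxW, fun y hy _ => hw y hy ..⟩
  · rintro ⟨W, hW, hxW, hw⟩
    have hη : ContDiffOn ℝ (⊤ : ℕ∞) (oneFormOfMultilinear ω) U :=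
      (continuousMultilinearCurryFin1 ℝ E ℝ).contDiff.comp_contDiffOn hω
    have hηx : oneFormOfMultilinear ω x ≠ 0 :=
      (map_ne_zero_iff _ (continuousMultilinearCurryFin1 ℝ E ℝ).injective).2 hx0
    obtain ⟨u, hxu, huW, hu, hu', f, hf, ℓ, h⟩ :=
      exists_openPartialHomeomorph_eq_smul_oneFormPullback (hW.inter hU)
        (hη.mono inter_subset_right) (fun y hy a b c => hw y hy.1 ![a, b, c]) ⟨hxW, hx⟩ hηx
    exact hasConformalConstantCoefficientsAt_of_eq_smul_oneFormPullback hxu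
      (huW.trans inter_subset_right) hu hu' hf h

/-- Example 1.20: a smooth `1`-form `ω` with `ω_x ≠ 0` has conformal
constant coefficients near `x` iff `ω ∧ dω = 0` near `x`, where
`(ω∧dω)_y(v₁,v₂,v₃) = (1/2) Σ_σ sgn(σ) ω_y(v_{σ1}) dω_y(v_{σ2},v_{σ3})` and
`dω_y(a,b) = (Dω_y(a))(b) − (Dω_y(b))(a)`. -/
theorem oneForm_conformalConstantCoefficients_iff (n : ℕ)
    (U : Set (Fin n → ℝ)) (hU : IsOpen U)
    (ω : (Fin n → ℝ) → ((Fin n → ℝ) [×1]→L[ℝ] ℝ))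
    (hω : ContDiffOn ℝ (⊤ : ℕ∞) ω U)
    (x : Fin n → ℝ) (hx : x ∈ U) (hx0 : ω x ≠ 0) :
    HasConformalConstantCoefficientsFormAt n 1 U ω x ↔
      ∃ W : Set (Fin n → ℝ), IsOpen W ∧ x ∈ W ∧
        ∀ y ∈ W, ∀ v : Fin 3 → (Fin n → ℝ),
          (1 / 2 : ℝ) * ∑ σ : Equiv.Perm (Fin 3),
            ((Equiv.Perm.sign σ : ℤ) : ℝ) * (ω y (fun _ => v (σ 0)) *
              (fderiv ℝ ω y (v (σ 1)) (fun _ => v (σ 2)) -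
               fderiv ℝ ω y (v (σ 2)) (fun _ => v (σ 1)))) = 0 :=
  oneForm_conformalConstantCoefficients_iff_general hU hω hx hx0
end

section
/- Let ω be a smooth p-form and V a smooth q-vector field on an open set U ⊆ ℝⁿ, and x ∈ U. Then: (i) ω has constant coefficients on a neighbourhood of x if and only if there exist an open neighbourhood V₀ ⊆ U of x and a smooth map u : V₀ → ℝⁿ with Du_y invertible for every y ∈ V₀, such that for all y ∈ V₀, all j = 1,…,n and all z₁,…,z_p ∈ {e₁,…,eₙ}: (Dω_y(e_j))(z₁,…,z_p) = Σ_{h=1}^{p} ω_y(z₁,…,Γ_y(e_j,z_h),…,z_p), where Γ_y(v,w) = (Du_y)⁻¹(D²u_y(v,w)). (ii) V has constant coefficients on a neighbourhood of x if and only if there exist such V₀ and u with: for all y ∈ V₀, all j and all covectors w₁,…,w_q ∈ {ε¹,…,εⁿ}: (DV_y(e_j))(w₁,…,w_q) = − Σ_{h=1}^{q} V_y(w₁,…, w_h ∘ Γ_y(e_j,·),…, w_q). -/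
/-!
Both parts are one statement about a moving frame `B` with connection form `S`, meaning
`DB_y(e) = S_y(e) ∘ B_y`: the derivative of the components `f (B w₁, …, B wₚ)` of a tensor field
`f` is the covariant derivative `∇f = Df + S · f` evaluated on the frame, so on a connected open
set the components are constant if and only if `∇f = 0`. For a form the frame of the chart `u` is
`(Du)⁻¹`, with connection form `-Γ`; for a multivector field it is `w ↦ w ∘ Du`, with connection
form `w ↦ w ∘ Γ`. Conversely, the inverse function theorem turns the solution `u` into a chart on
a ball around the point, and `∇f = 0` can be tested on a basis.
-/

open scoped Topology

section MovingFrame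

variable {𝕜 X F F' G ι : Type*} [NontriviallyNormedField 𝕜]
  [NormedAddCommGroup X] [NormedSpace 𝕜 X] [NormedAddCommGroup F] [NormedSpace 𝕜 F]
  [NormedAddCommGroup F'] [NormedSpace 𝕜 F'] [NormedAddCommGroup G] [NormedSpace 𝕜 G]

/-- `B` is a moving frame with connection form `S` at `y`: its derivative in the direction `e` is
`S e ∘ B y`. -/
def HasConnectionFormAt (B : X → F' →L[𝕜] F) (S : X →L[𝕜] F →L[𝕜] F) (y : X) : Prop :=
  HasFDerivAt B ((ContinuousLinearMap.compL 𝕜 F' F F).flip (B y) ∘L S) y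

lemma compContinuousLinearMap_injective_of_surjective {A : ι → F' →L[𝕜] F}
    (hA : ∀ i, Function.Surjective (A i)) :
    Function.Injective fun g : ContinuousMultilinearMap 𝕜 (fun _ : ι => F) G =>
      g.compContinuousLinearMap A := by
  intro g h hgh
  ext z
  choose w hw using fun i => hA i (z i)
  simpa [hw] using congr($hgh w)

lemma continuousLinearMap_eq_zero_of_basis [Finite ι] {κ κ' : Type*} (bX : Module.Basis κ 𝕜 X)
    (bF : Module.Basis κ' 𝕜 F) {L : X →L[𝕜] ContinuousMultilinearMap 𝕜 (fun _ : ι => F) G}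
    (hL : ∀ j (s : ι → κ'), L (bX j) (fun i => bF (s i)) = 0) : L = 0 :=
  ContinuousLinearMap.coe_injective <| bX.ext fun j =>
    ContinuousMultilinearMap.toMultilinearMap_injective <|
      Module.Basis.ext_multilinear (fun _ => bF) (hL j)

variable [Fintype ι] [DecidableEq ι]
  {f : X → ContinuousMultilinearMap 𝕜 (fun _ : ι => F) G}
  {B : X → F' →L[𝕜] F} {S : X →L[𝕜] F →L[𝕜] F} {y : X}

/-- The covariant derivative `Df + S · f` at `y` of a field of multilinear maps, where the
endomorphism `S e` acts on `f y` as a derivation, inserted in one argument at a time. The sign of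
`S` is that of `HasConnectionFormAt`, so for forms `S` is minus the Christoffel symbol. -/
noncomputable def covariantDeriv (f : X → ContinuousMultilinearMap 𝕜 (fun _ : ι => F) G)
    (S : X →L[𝕜] F →L[𝕜] F) (y : X) :
    X →L[𝕜] ContinuousMultilinearMap 𝕜 (fun _ : ι => F) G :=
  fderiv 𝕜 f y +
    (f y).fderivCompContinuousLinearMap (fun _ => .id 𝕜 F) ∘L .pi fun _ => S

lemma covariantDeriv_apply (f : X → ContinuousMultilinearMap 𝕜 (fun _ : ι => F) G)
    (S : X →L[𝕜] F →L[𝕜] F) (y e : X) (z : ι → F) :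
    covariantDeriv f S y e z =
      fderiv 𝕜 f y e z + ∑ i, f y (Function.update z i (S e (z i))) := by
  have insert_eq (i : ι) :
      (fun j => Function.update (fun _ => ContinuousLinearMap.id 𝕜 F) i (S e) j (z j)) =
        Function.update z i (S e (z i)) := by
    ext j
    obtain rfl | hj := eq_or_ne j i <;> simp [*]
  simp [covariantDeriv, insert_eq]

lemma hasFDerivAt_compContinuousLinearMap_frame (hf : DifferentiableAt 𝕜 f y)
    (hB : HasConnectionFormAt B S y) :
    HasFDerivAt (fun t => (f t).compContinuousLinearMap fun _ => B t)
      (ContinuousMultilinearMap.compContinuousLinearMapL (fun _ => B y) ∘L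
        covariantDeriv f S y) y := by
  convert! hf.hasFDerivAt.continuousMultilinearMapCompContinuousLinearMap fun _ : ι => hB using 1
  ext e w
  have update_frame (i : ι) :
      (fun j => Function.update (fun _ => B y) i (S e ∘L B y) j (w j)) =
        Function.update (fun j => B y (w j)) i (S e (B y (w i))) := by
    ext j
    obtain rfl | hj := eq_or_ne j i <;> simp [*]
  simp [covariantDeriv_apply, update_frame]

lemma covariantDeriv_eq_zero_of_eventuallyEq_const (hf : DifferentiableAt 𝕜 f y)
    (hB : HasConnectionFormAt B S y) (hsurj : Function.Surjective (B y))
    {c : ContinuousMultilinearMap 𝕜 (fun _ : ι => F') G}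
    (hc : ∀ᶠ t in 𝓝 y, (f t).compContinuousLinearMap (fun _ => B t) = c) :
    covariantDeriv f S y = 0 := by
  have hzero := (hasFDerivAt_compContinuousLinearMap_frame hf hB).unique
    ((hasFDerivAt_const c y).congr_of_eventuallyEq hc)
  ext1 e
  exact compContinuousLinearMap_injective_of_surjective (fun _ => hsurj) congr($hzero e)

end MovingFrame

section CoordinateConnection

variable {𝕜 E E' : Type*} [NontriviallyNormedField 𝕜]
  [NormedAddCommGroup E] [NormedSpace 𝕜 E] [NormedAddCommGroup E'] [NormedSpace 𝕜 E']
  {u : E → E'} {y : E}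

lemma isInvertible_of_bijective [CompleteSpace E] [CompleteSpace E'] {A : E →L[𝕜] E'}
    (hA : Function.Bijective A) : A.IsInvertible :=
  ⟨.ofBijective A (LinearMap.ker_eq_bot.2 hA.1) (LinearMap.range_eq_top.2 hA.2), by ext; simp⟩

lemma hasFDerivAt_fderiv_of_contDiffAt_two (hu : ContDiffAt 𝕜 2 u y) :
    HasFDerivAt (fderiv 𝕜 u) (fderiv 𝕜 (fderiv 𝕜 u) y) y :=
  ((hu.fderiv_right (m := 1) le_rfl).differentiableAt one_ne_zero).hasFDerivAt

/-- The Christoffel symbol `Γ_y(v, w) = (Du_y)⁻¹(D²u_y(v, w))` of the connection that makes the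
coordinate frame of `u` parallel; it is `0` where `Du_y` is not invertible. -/
noncomputable def coordConnection (u : E → E') (y : E) : E →L[𝕜] E →L[𝕜] E :=
  ContinuousLinearMap.compL 𝕜 E E' E (fderiv 𝕜 u y).inverse ∘L fderiv 𝕜 (fderiv 𝕜 u) y

lemma coordConnection_apply (u : E → E') (y v w : E) :
    coordConnection (𝕜 := 𝕜) u y v w =
      (fderiv 𝕜 u y).inverse (fderiv 𝕜 (fderiv 𝕜 u) y v w) :=
  rfl

lemma eq_coordConnection_iff (hu : ContDiffAt 𝕜 2 u y) (hinv : (fderiv 𝕜 u y).IsInvertible)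
    {Γ : E →L[𝕜] E →L[𝕜] E} :
    Γ = coordConnection u y ↔
      ∀ v w, fderiv 𝕜 u y (Γ v w) = fderiv 𝕜 (fun t => fderiv 𝕜 u t w) y v := by
  have second_deriv (v w : E) :
      fderiv 𝕜 (fun t => fderiv 𝕜 u t w) y v = fderiv 𝕜 (fderiv 𝕜 u) y v w := by
    simp [fderiv_clm_apply (hasFDerivAt_fderiv_of_contDiffAt_two hu).differentiableAt]
  simp only [ContinuousLinearMap.ext_iff, coordConnection_apply, second_deriv,
    eq_comm (b := (fderiv 𝕜 u y).inverse _), hinv.inverse_apply_eq]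
  simp only [eq_comm]

lemma hasConnectionFormAt_inverse_fderiv [CompleteSpace E] (hu : ContDiffAt 𝕜 2 u y)
    (hinv : (fderiv 𝕜 u y).IsInvertible) :
    HasConnectionFormAt (fun t => (fderiv 𝕜 u t).inverse) (-coordConnection u y) y := by
  obtain ⟨N, -, hN, hNu, hderiv⟩ := exists_continuousLinearEquiv_fderiv_symm_eq hu hinv
  have inverse_eq : ∀ᶠ t in 𝓝 y, (fderiv 𝕜 u t).inverse = (N t).symm := by
    filter_upwards [hNu] with t ht using by simp [← ht]
  refine HasFDerivAt.congr_of_eventuallyEq ?_ inverse_eq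
  convert! (hN.differentiableAt one_ne_zero).hasFDerivAt using 1
  ext v w
  simp [hderiv, coordConnection_apply, inverse_eq.self_of_nhds]

/-- The connection form `w ↦ w ∘ Γ e` induced on covectors by `Γ`. -/
noncomputable def covectorConnection (Γ : E →L[𝕜] E →L[𝕜] E) :
    E →L[𝕜] (E →L[𝕜] 𝕜) →L[𝕜] (E →L[𝕜] 𝕜) :=
  (ContinuousLinearMap.compL 𝕜 E E 𝕜).flip ∘L Γ

lemma covectorConnection_apply (Γ : E →L[𝕜] E →L[𝕜] E) (e : E) (w : E →L[𝕜] 𝕜) :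
    covectorConnection Γ e w = w ∘L Γ e :=
  rfl

lemma hasConnectionFormAt_precomp_fderiv (hu : ContDiffAt 𝕜 2 u y)
    (hinv : (fderiv 𝕜 u y).IsInvertible) :
    HasConnectionFormAt (F := E →L[𝕜] 𝕜) (fun t => (fderiv 𝕜 u t).precomp 𝕜)
      (covectorConnection (coordConnection u y)) y := by
  have hderiv := HasFDerivAt.comp (G := (E' →L[𝕜] 𝕜) →L[𝕜] (E →L[𝕜] 𝕜)) y
    (ContinuousLinearMap.compL 𝕜 E E' 𝕜).flip.hasFDerivAt
    (hasFDerivAt_fderiv_of_contDiffAt_two hu)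
  refine hderiv.congr_fderiv ?_
  ext e w v
  simp [covectorConnection_apply, coordConnection_apply, hinv.self_apply_inverse]

lemma precomp_surjective_of_isInvertible {A : E →L[𝕜] E'} (hA : A.IsInvertible) :
    Function.Surjective (A.precomp 𝕜 : (E' →L[𝕜] 𝕜) → E →L[𝕜] 𝕜) := fun w =>
  ⟨w ∘L A.inverse, by ext v; simp [hA.inverse_apply_self]⟩

end CoordinateConnection

section Chart

variable {E E' F F' G ι : Type*} [NormedAddCommGroup E] [NormedSpace ℝ E]
  [NormedAddCommGroup E'] [NormedSpace ℝ E'] [NormedAddCommGroup F] [NormedSpace ℝ F]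
  [NormedAddCommGroup F'] [NormedSpace ℝ F'] [NormedAddCommGroup G] [NormedSpace ℝ G]

lemma exists_compContinuousLinearMap_eq_const_of_covariantDeriv_eq_zero [Fintype ι]
    [DecidableEq ι] {f : E → ContinuousMultilinearMap ℝ (fun _ : ι => F) G}
    {B : E → F' →L[ℝ] F} {S : E → E →L[ℝ] F →L[ℝ] F} {W : Set E} (hWo : IsOpen W)
    (hWc : IsPreconnected W) (hf : ∀ y ∈ W, DifferentiableAt ℝ f y)
    (hB : ∀ y ∈ W, HasConnectionFormAt B (S y) y)
    (hzero : ∀ y ∈ W, covariantDeriv f (S y) y = 0) :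
    ∃ c, ∀ y ∈ W, (f y).compContinuousLinearMap (fun _ => B y) = c := by
  have hderiv (y) (hy : y ∈ W) :=
    hasFDerivAt_compContinuousLinearMap_frame (hf y hy) (hB y hy)
  refine hWo.exists_is_const_of_fderiv_eq_zero (𝕜 := ℝ) hWc
    (fun y hy => (hderiv y hy).differentiableAt.differentiableWithinAt) fun y hy => ?_
  rw [(hderiv y hy).fderiv, hzero y hy, ContinuousLinearMap.comp_zero, Pi.zero_apply]

/-- `Γ` is the Christoffel symbol `(Du)⁻¹ ∘ D²u` on `W`, written without inverting `Du`. -/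
def IsChristoffelOn (u : E → E') (Γ : E → E →L[ℝ] E →L[ℝ] E) (W : Set E) : Prop :=
  ∀ y ∈ W, ∀ v w : E, fderiv ℝ u y (Γ y v w) = fderiv ℝ (fun t => fderiv ℝ u t w) y v

variable (E') in
/-- `x` has an open neighbourhood in `U` with a `C^m` local diffeomorphism to `E'` whose Christoffel
symbol `Γ` satisfies the condition `P (Γ y) y` at every point `y`. -/
def HasChartWithChristoffel (m : WithTop ℕ∞) (U : Set E)
    (P : (E →L[ℝ] E →L[ℝ] E) → E → Prop) (x : E) : Prop :=
  ∃ V₀, IsOpen V₀ ∧ x ∈ V₀ ∧ V₀ ⊆ U ∧ ∃ u : E → E',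
    ContDiffOn ℝ m u V₀ ∧ (∀ y ∈ V₀, Function.Bijective (fderiv ℝ u y)) ∧
    ∃ Γ, IsChristoffelOn u Γ V₀ ∧ ∀ y ∈ V₀, P (Γ y) y

variable [CompleteSpace E] {x : E} {m : WithTop ℕ∞}

lemma isChristoffelOn_iff_eqOn [CompleteSpace E'] {u : E → E'} {Γ : E → E →L[ℝ] E →L[ℝ] E}
    {W : Set E} (hm : 2 ≤ m) (hW : IsOpen W) (hu : ContDiffOn ℝ m u W)
    (hbij : ∀ y ∈ W, Function.Bijective (fderiv ℝ u y)) :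
    IsChristoffelOn u Γ W ↔ Set.EqOn Γ (coordConnection u) W :=
  forall₂_congr fun y hy => (eq_coordConnection_iff
    ((hu.contDiffAt (hW.mem_nhds hy)).of_le hm) (isInvertible_of_bijective (hbij y hy))).symm

lemma hasChartWithChristoffel_iff_coordConnection [CompleteSpace E'] {U : Set E}
    {P : (E →L[ℝ] E →L[ℝ] E) → E → Prop} (hm : 2 ≤ m) :
    HasChartWithChristoffel E' m U P x ↔
      ∃ V₀, IsOpen V₀ ∧ x ∈ V₀ ∧ V₀ ⊆ U ∧ ∃ u : E → E',
        ContDiffOn ℝ m u V₀ ∧ (∀ y ∈ V₀, Function.Bijective (fderiv ℝ u y)) ∧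
        ∀ y ∈ V₀, P (coordConnection u y) y := by
  refine exists_congr fun V₀ => and_congr_right fun hV₀ => and_congr_right' <|
    and_congr_right' <| exists_congr fun u => and_congr_right fun hu =>
    and_congr_right fun hbij => ?_
  simp only [isChristoffelOn_iff_eqOn hm hV₀ hu hbij]
  refine ⟨?_, fun hP => ⟨coordConnection u, Set.eqOn_refl _ _, hP⟩⟩
  rintro ⟨Γ, hΓ, hP⟩ y hy
  exact hΓ hy ▸ hP y hy

lemma exists_ball_injOn_isOpen_image {u : E → E'} {V : Set E} (hV : V ∈ 𝓝 x)
    (hu : ContDiffAt ℝ m u x) (hm : m ≠ 0) (hinv : (fderiv ℝ u x).IsInvertible) :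
    ∃ r > 0, Metric.ball x r ⊆ V ∧ Set.InjOn u (Metric.ball x r) ∧
      IsOpen (u '' Metric.ball x r) := by
  obtain ⟨A, hA⟩ := hinv
  have hderiv : HasFDerivAt u (A : E →L[ℝ] E') x :=
    hA ▸ (hu.differentiableAt hm).hasFDerivAt
  let R := hu.toOpenPartialHomeomorph u hderiv hm
  have hsource : R.source ∈ 𝓝 x :=
    R.open_source.mem_nhds (hu.mem_toOpenPartialHomeomorph_source hderiv hm)
  obtain ⟨r, hr, hball⟩ := Metric.mem_nhds_iff.1 (Filter.inter_mem hV hsource)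
  obtain ⟨hballV, hballR⟩ := Set.subset_inter_iff.1 hball
  exact ⟨r, hr, hballV, R.injOn.mono hballR,
    R.isOpen_image_of_subset_source Metric.isOpen_ball hballR⟩

/-- The functors `B` and `S` turn the differential of a chart and its Christoffel symbol into a
frame of the bundle carrying `f` and the connection form of that frame. -/
theorem exists_chart_eq_const_iff_covariantDeriv_eq_zero [CompleteSpace E'] [Fintype ι]
    [DecidableEq ι] (hm : 2 ≤ m) {U : Set E}
    {f : E → ContinuousMultilinearMap ℝ (fun _ : ι => F) G} (hf : DifferentiableOn ℝ f U)
    {B : (E →L[ℝ] E') → F' →L[ℝ] F} {S : (E →L[ℝ] E →L[ℝ] E) → E →L[ℝ] F →L[ℝ] F}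
    (hsurj : ∀ A, A.IsInvertible → Function.Surjective (B A))
    (hBS : ∀ (u : E → E') (y : E), ContDiffAt ℝ 2 u y → (fderiv ℝ u y).IsInvertible →
      HasConnectionFormAt (fun t => B (fderiv ℝ u t)) (S (coordConnection u y)) y) :
    (∃ V, IsOpen V ∧ x ∈ V ∧ V ⊆ U ∧ ∃ u : E → E',
      ContDiffOn ℝ m u V ∧ Set.InjOn u V ∧ IsOpen (u '' V) ∧
      (∀ y ∈ V, Function.Bijective (fderiv ℝ u y)) ∧
      ∃ c, ∀ y ∈ V, (f y).compContinuousLinearMap (fun _ => B (fderiv ℝ u y)) = c) ↔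
    HasChartWithChristoffel E' m U (fun Γ y => covariantDeriv f (S Γ) y = 0) x := by
  rw [hasChartWithChristoffel_iff_coordConnection hm]
  have frame {V : Set E} {u : E → E'} (hV : IsOpen V) (hu : ContDiffOn ℝ m u V)
      (hbij : ∀ y ∈ V, Function.Bijective (fderiv ℝ u y)) (y) (hy : y ∈ V) :
      HasConnectionFormAt (fun t => B (fderiv ℝ u t)) (S (coordConnection u y)) y :=
    hBS u y ((hu.contDiffAt (hV.mem_nhds hy)).of_le hm) (isInvertible_of_bijective (hbij y hy))
  have diff {V : Set E} (hV : IsOpen V) (hVU : V ⊆ U) (y) (hy : y ∈ V) : DifferentiableAt ℝ f y :=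
    (hf.mono hVU).differentiableAt (hV.mem_nhds hy)
  constructor
  · rintro ⟨V, hV, hxV, hVU, u, hu, -, -, hbij, c, hc⟩
    exact ⟨V, hV, hxV, hVU, u, hu, hbij, fun y hy =>
      covariantDeriv_eq_zero_of_eventuallyEq_const (diff hV hVU y hy) (frame hV hu hbij y hy)
        (hsurj _ (isInvertible_of_bijective (hbij y hy)))
        (Filter.eventually_of_mem (hV.mem_nhds hy) hc)⟩
  · rintro ⟨V, hV, hxV, hVU, u, hu, hbij, hzero⟩
    have hVx := hV.mem_nhds hxV
    obtain ⟨r, hr, hball, hinj, hopen⟩ := exists_ball_injOn_isOpen_image hVx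
      (hu.contDiffAt hVx) (two_pos.trans_le hm).ne' (isInvertible_of_bijective (hbij x hxV))
    exact ⟨Metric.ball x r, Metric.isOpen_ball, Metric.mem_ball_self hr, hball.trans hVU, u,
      hu.mono hball, hinj, hopen, fun y hy => hbij y (hball hy),
      exists_compContinuousLinearMap_eq_const_of_covariantDeriv_eq_zero Metric.isOpen_ball
        (convex_ball x r).isPreconnected (fun y hy => diff hV hVU y (hball hy))
        (fun y hy => frame hV hu hbij y (hball hy)) fun y hy => hzero y (hball hy)⟩

end Chart

section Euclidean

variable {n : ℕ}

/-- The basis of `(ℝⁿ)*` dual to the standard basis of `ℝⁿ`. -/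
noncomputable def covectorBasis (n : ℕ) : Module.Basis (Fin n) ℝ ((Fin n → ℝ) →L[ℝ] ℝ) :=
  (Pi.basisFun ℝ (Fin n)).dualBasis.map LinearMap.toContinuousLinearMap

lemma covectorBasis_apply (i : Fin n) :
    covectorBasis n i = ContinuousLinearMap.proj (R := ℝ) (φ := fun _ : Fin n => ℝ) i := by
  ext v
  simp [covectorBasis]

/-- The system `∂F_J/∂x^j = Φ_{j,J}` at `y` for a covariant tensor field `ω` and a Christoffel
symbol `Γ`. -/
def FormSystemAt {p : ℕ} (ω : (Fin n → ℝ) → ((Fin n → ℝ) [×p]→L[ℝ] ℝ))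
    (Γ : (Fin n → ℝ) →L[ℝ] (Fin n → ℝ) →L[ℝ] (Fin n → ℝ)) (y : Fin n → ℝ) : Prop :=
  ∀ (j : Fin n) (s : Fin p → Fin n),
    fderiv ℝ ω y (Pi.single j (1 : ℝ)) (fun i => Pi.single (s i) (1 : ℝ)) =
      ∑ h : Fin p, ω y (Function.update
        (fun i => (Pi.single (s i) (1 : ℝ) : Fin n → ℝ)) h
        (Γ (Pi.single j (1 : ℝ)) (Pi.single (s h) (1 : ℝ))))

/-- The system `∂F̄_J/∂x^j = -Φ̄_{j,J}` at `y` for a contravariant tensor field `V` and a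
Christoffel symbol `Γ`. -/
def VecSystemAt {q : ℕ} (V : (Fin n → ℝ) → (((Fin n → ℝ) →L[ℝ] ℝ) [×q]→L[ℝ] ℝ))
    (Γ : (Fin n → ℝ) →L[ℝ] (Fin n → ℝ) →L[ℝ] (Fin n → ℝ)) (y : Fin n → ℝ) : Prop :=
  ∀ (j : Fin n) (s : Fin q → Fin n),
    fderiv ℝ V y (Pi.single j (1 : ℝ)) (fun i => ContinuousLinearMap.proj (s i)) =
      -∑ h : Fin q, V y (Function.update
        (fun i => (ContinuousLinearMap.proj (s i) : (Fin n → ℝ) →L[ℝ] ℝ)) h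
        ((ContinuousLinearMap.proj (s h) : (Fin n → ℝ) →L[ℝ] ℝ).comp
          (Γ (Pi.single j (1 : ℝ)))))

lemma formSystemAt_iff_covariantDeriv_eq_zero {p : ℕ}
    {ω : (Fin n → ℝ) → ((Fin n → ℝ) [×p]→L[ℝ] ℝ)}
    {Γ : (Fin n → ℝ) →L[ℝ] (Fin n → ℝ) →L[ℝ] (Fin n → ℝ)} {y : Fin n → ℝ} :
    FormSystemAt ω Γ y ↔ covariantDeriv ω (-Γ) y = 0 := by
  have cov_apply (e : Fin n → ℝ) (z : Fin p → Fin n → ℝ) : covariantDeriv ω (-Γ) y e z =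
      fderiv ℝ ω y e z - ∑ h, ω y (Function.update z h (Γ e (z h))) := by
    have update_neg (h : Fin p) : ω y (Function.update z h (-Γ e (z h))) =
        -ω y (Function.update z h (Γ e (z h))) :=
      map_neg ((ω y).toContinuousLinearMap z h) _
    simp [covariantDeriv_apply, update_neg, sub_eq_add_neg]
  refine ⟨fun hω => ?_, fun hω j s => ?_⟩
  · refine continuousLinearMap_eq_zero_of_basis (Pi.basisFun ℝ (Fin n)) (Pi.basisFun ℝ (Fin n))
      fun j s => ?_
    simpa [cov_apply, sub_eq_zero] using hω j s
  · exact sub_eq_zero.1 ((cov_apply _ _).symm.trans congr($hω _ _))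

lemma vecSystemAt_iff_covariantDeriv_eq_zero {q : ℕ}
    {V : (Fin n → ℝ) → (((Fin n → ℝ) →L[ℝ] ℝ) [×q]→L[ℝ] ℝ)}
    {Γ : (Fin n → ℝ) →L[ℝ] (Fin n → ℝ) →L[ℝ] (Fin n → ℝ)} {y : Fin n → ℝ} :
    VecSystemAt V Γ y ↔ covariantDeriv V (covectorConnection Γ) y = 0 := by
  refine ⟨fun hV => ?_, fun hV j s => ?_⟩
  · refine continuousLinearMap_eq_zero_of_basis (Pi.basisFun ℝ (Fin n)) (covectorBasis n)
      fun j s => ?_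
    simpa [covariantDeriv_apply, covectorBasis_apply, covectorConnection_apply,
      add_eq_zero_iff_eq_neg] using hV j s
  · exact eq_neg_of_add_eq_zero_left
      ((covariantDeriv_apply V (covectorConnection Γ) y _ _).symm.trans congr($hV _ _))

lemma hasConstantCoefficientsFormAt_iff_hasChartWithChristoffel {p : ℕ} {U : Set (Fin n → ℝ)}
    {ω : (Fin n → ℝ) → ((Fin n → ℝ) [×p]→L[ℝ] ℝ)} (hω : DifferentiableOn ℝ ω U)
    (x : Fin n → ℝ) :
    HasConstantCoefficientsFormAt n p U ω x ↔
      HasChartWithChristoffel (Fin n → ℝ) (⊤ : ℕ∞) U (FormSystemAt ω) x := by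
  have system_eq : FormSystemAt ω = fun Γ y => covariantDeriv ω (-Γ) y = 0 :=
    funext₂ fun Γ y => propext formSystemAt_iff_covariantDeriv_eq_zero
  rw [system_eq, ← exists_chart_eq_const_iff_covariantDeriv_eq_zero
    (B := ContinuousLinearMap.inverse) (S := fun Γ => -Γ) ENat.LEInfty.out hω
    (fun A hA => hA.inverse.surjective) fun u y => hasConnectionFormAt_inverse_fderiv]
  refine exists_congr fun V => and_congr_right' <| and_congr_right' <| and_congr_right' <|
    exists_congr fun u => and_congr_right' <| and_congr_right' <| and_congr_right' <|
    and_congr_right fun hbij => exists_congr fun c => forall₂_congr fun y hy => ?_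
  have hinv := isInvertible_of_bijective (hbij y hy)
  constructor
  · intro hc
    ext w
    simp [hc, hinv.self_apply_inverse]
  · rintro rfl v
    simp [hinv.inverse_apply_self]

lemma hasConstantCoefficientsVecAt_iff_hasChartWithChristoffel {q : ℕ} {U : Set (Fin n → ℝ)}
    {V : (Fin n → ℝ) → (((Fin n → ℝ) →L[ℝ] ℝ) [×q]→L[ℝ] ℝ)} (hV : DifferentiableOn ℝ V U)
    (x : Fin n → ℝ) :
    HasConstantCoefficientsVecAt n q U V x ↔
      HasChartWithChristoffel (Fin n → ℝ) (⊤ : ℕ∞) U (VecSystemAt V) x := by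
  have system_eq : VecSystemAt V = fun Γ y => covariantDeriv V (covectorConnection Γ) y = 0 :=
    funext₂ fun Γ y => propext vecSystemAt_iff_covariantDeriv_eq_zero
  rw [system_eq, ← exists_chart_eq_const_iff_covariantDeriv_eq_zero
    (B := fun A => A.precomp ℝ) (S := covectorConnection) ENat.LEInfty.out hV
    (fun A => precomp_surjective_of_isInvertible) fun u y => hasConnectionFormAt_precomp_fderiv]
  simp only [HasConstantCoefficientsVecAt, ContinuousMultilinearMap.ext_iff, eq_comm,
    ContinuousMultilinearMap.compContinuousLinearMap_apply, ContinuousLinearMap.precomp_apply]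

end Euclidean

theorem constantCoefficients_iff_PDEsystem_general {n p q : ℕ} {U : Set (Fin n → ℝ)}
    {ω : (Fin n → ℝ) → ((Fin n → ℝ) [×p]→L[ℝ] ℝ)} (hω : DifferentiableOn ℝ ω U)
    {V : (Fin n → ℝ) → (((Fin n → ℝ) →L[ℝ] ℝ) [×q]→L[ℝ] ℝ)} (hV : DifferentiableOn ℝ V U)
    (x : Fin n → ℝ) :
    (HasConstantCoefficientsFormAt n p U ω x ↔
      HasChartWithChristoffel (Fin n → ℝ) (⊤ : ℕ∞) U (FormSystemAt ω) x) ∧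
    (HasConstantCoefficientsVecAt n q U V x ↔
      HasChartWithChristoffel (Fin n → ℝ) (⊤ : ℕ∞) U (VecSystemAt V) x) :=
  ⟨hasConstantCoefficientsFormAt_iff_hasChartWithChristoffel hω x,
    hasConstantCoefficientsVecAt_iff_hasChartWithChristoffel hV x⟩

/-- Theorem 3.1: a smooth `p`-form `ω` (resp. `q`-vector field `V`)
has constant coefficients near `x` iff there are an open neighbourhood `V₀ ∋ x`,
`V₀ ⊆ U`, and a smooth map `u : V₀ → ℝⁿ` with invertible differential such that,
with `Γ_y(v,w) = (Du_y)⁻¹(D²u_y(v,w))` (characterized by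
`Du_y(Γ_y(v,w)) = D²u_y(v,w)`), the second-order PDE system
`(Dω_y(e_j))(z) = Σ_h ω_y(z₁,…,Γ_y(e_j,z_h),…,z_p)` (resp.
`(DV_y(e_j))(w) = −Σ_h V_y(w₁,…,w_h∘Γ_y(e_j,·),…,w_q)`) holds on `V₀` for all
basis vectors `z_i ∈ {e₁,…,eₙ}` (resp. basis covectors `w_i ∈ {ε¹,…,εⁿ}`). -/
theorem constantCoefficients_iff_PDEsystem (n p q : ℕ)
    (U : Set (Fin n → ℝ)) (hU : IsOpen U)
    (ω : (Fin n → ℝ) → ((Fin n → ℝ) [×p]→L[ℝ] ℝ))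
    (hω : ContDiffOn ℝ (⊤ : ℕ∞) ω U)
    (haltω : ∀ y ∈ U, ∀ v : Fin p → (Fin n → ℝ), ∀ i j, i ≠ j → v i = v j →
      ω y v = 0)
    (V : (Fin n → ℝ) → (((Fin n → ℝ) →L[ℝ] ℝ) [×q]→L[ℝ] ℝ))
    (hV : ContDiffOn ℝ (⊤ : ℕ∞) V U)
    (haltV : ∀ y ∈ U, ∀ w : Fin q → ((Fin n → ℝ) →L[ℝ] ℝ), ∀ i j, i ≠ j →
      w i = w j → V y w = 0)
    (x : Fin n → ℝ) (hx : x ∈ U) :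
    (HasConstantCoefficientsFormAt n p U ω x ↔
      ∃ V₀ : Set (Fin n → ℝ), IsOpen V₀ ∧ x ∈ V₀ ∧ V₀ ⊆ U ∧
        ∃ u : (Fin n → ℝ) → (Fin n → ℝ),
          ContDiffOn ℝ (⊤ : ℕ∞) u V₀ ∧
          (∀ y ∈ V₀, Function.Bijective (fderiv ℝ u y)) ∧
          ∃ Γ : (Fin n → ℝ) → ((Fin n → ℝ) →L[ℝ] (Fin n → ℝ) →L[ℝ] (Fin n → ℝ)),
            (∀ y ∈ V₀, ∀ v w : Fin n → ℝ,
              fderiv ℝ u y (Γ y v w) = fderiv ℝ (fun t => fderiv ℝ u t w) y v) ∧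
            (∀ y ∈ V₀, ∀ j : Fin n, ∀ s : Fin p → Fin n,
              fderiv ℝ ω y (Pi.single j (1 : ℝ))
                  (fun i => Pi.single (s i) (1 : ℝ)) =
                ∑ h : Fin p, ω y (Function.update
                  (fun i => (Pi.single (s i) (1 : ℝ) : Fin n → ℝ)) h
                  (Γ y (Pi.single j (1 : ℝ)) (Pi.single (s h) (1 : ℝ))))))
    ∧
    (HasConstantCoefficientsVecAt n q U V x ↔
      ∃ V₀ : Set (Fin n → ℝ), IsOpen V₀ ∧ x ∈ V₀ ∧ V₀ ⊆ U ∧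
        ∃ u : (Fin n → ℝ) → (Fin n → ℝ),
          ContDiffOn ℝ (⊤ : ℕ∞) u V₀ ∧
          (∀ y ∈ V₀, Function.Bijective (fderiv ℝ u y)) ∧
          ∃ Γ : (Fin n → ℝ) → ((Fin n → ℝ) →L[ℝ] (Fin n → ℝ) →L[ℝ] (Fin n → ℝ)),
            (∀ y ∈ V₀, ∀ v w : Fin n → ℝ,
              fderiv ℝ u y (Γ y v w) = fderiv ℝ (fun t => fderiv ℝ u t w) y v) ∧
            (∀ y ∈ V₀, ∀ j : Fin n, ∀ s : Fin q → Fin n,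
              fderiv ℝ V y (Pi.single j (1 : ℝ))
                  (fun i => ContinuousLinearMap.proj (s i)) =
                - ∑ h : Fin q, V y (Function.update
                  (fun i => (ContinuousLinearMap.proj (s i) :
                    (Fin n → ℝ) →L[ℝ] ℝ)) h
                  ((ContinuousLinearMap.proj (s h) : (Fin n → ℝ) →L[ℝ] ℝ).comp
                    (Γ y (Pi.single j (1 : ℝ))))))) :=
  constantCoefficients_iff_PDEsystem_general (hω.differentiableOn (by simp))
    (hV.differentiableOn (by simp)) x
end
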